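/- arXiv:2511.12157 — 9 statements merged into one kernel-verified Lean document; each statement's English description precedes it below -/
import Mathlib

section
/- Let G : ℝ^M → ℝ be differentiable and ν-strongly convex for some ν > 0, and let A ∈ ℝ^{M×N} satisfy the LRIP at order K with constant δ < 1. Then F := G∘A satisfies the restricted strong convexity property with constant ν(1−δ): for all x, x' ∈ ℝ^N with ‖x − x'‖₀ ≤ K, one has ⟨∇F(x) − ∇F(x'), x − x'⟩ ≥ ν(1−δ)‖x − x'‖₂². -/
open Classical

noncomputable section

/-- `‖x‖₀`: the number of nonzero entries of a vector. -/
def norm0 {ι : Type*} [Fintype ι] (x : ι → ℝ) : ℕ :=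
  (Finset.univ.filter fun i => x i ≠ 0).card

/-- Euclidean inner product on `ι → ℝ`. -/
def dotp {ι : Type*} [Fintype ι] (x y : ι → ℝ) : ℝ := ∑ i, x i * y i

/-- squared Euclidean norm. -/
def sqnorm {ι : Type*} [Fintype ι] (x : ι → ℝ) : ℝ := ∑ i, (x i) ^ 2

/-- Euclidean norm. -/
def enorm2 {ι : Type*} [Fintype ι] (x : ι → ℝ) : ℝ := Real.sqrt (sqnorm x)

/-- gradient via the Fréchet derivative: `(grad F x) i = ∂F/∂x_i(x)`. -/
def grad {ι : Type*} [Fintype ι] [DecidableEq ι] (F : (ι → ℝ) → ℝ) (x : ι → ℝ) : ι → ℝ :=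
  fun i => fderiv ℝ F x (Pi.single i 1)

/-- `A` satisfies the LRIP at order `K` with constant `δ`: for every index set `ω` with
`#ω ≤ K` and every `u ∈ ℝ^{#ω}`, `‖A_ω u‖₂² ≥ (1-δ)‖u‖₂²`. -/
def LRIP {m n : Type*} [Fintype m] [Fintype n] [DecidableEq n]
    (A : Matrix m n ℝ) (K : ℕ) (δ : ℝ) : Prop :=
  ∀ ω : Finset n, ω.card ≤ K → ∀ u : {i // i ∈ ω} → ℝ,
    (1 - δ) * sqnorm u ≤ sqnorm ((A.submatrix id (fun j : {i // i ∈ ω} => (j : n))).mulVec u)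

lemma aux_first_order {M : ℕ} (G : (Fin M → ℝ) → ℝ) (ν : ℝ)
    (hGdiff : Differentiable ℝ G)
    (hGsc : ∀ w v : Fin M → ℝ, ∀ t : ℝ, 0 ≤ t → t ≤ 1 →
      G (t • w + (1 - t) • v) ≤ t * G w + (1 - t) * G v - ν / 2 * t * (1 - t) * sqnorm (w - v))
    (w v : Fin M → ℝ) :
    fderiv ℝ G v (w - v) ≤ G w - G v - ν / 2 * sqnorm (w - v) := by
  have hl : HasDerivAt (fun t : ℝ => v + t • (w - v)) (w - v) 0 := by
    simpa using ((hasDerivAt_id (0:ℝ)).smul_const (w - v)).const_add v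
  have hG : HasFDerivAt G (fderiv ℝ G v) (v + (0:ℝ) • (w - v)) := by
    simpa using (hGdiff v).hasFDerivAt
  have hd := hG.comp_hasDerivAt (0:ℝ) hl
  have ht := (hasDerivAt_iff_tendsto_slope.1 hd).mono_left
    (nhdsWithin_mono (0:ℝ) (fun x (hx : x ∈ Set.Ioi (0:ℝ)) => ne_of_gt hx))
  have hr : Filter.Tendsto (fun t : ℝ => G w - G v - ν / 2 * (1 - t) * sqnorm (w - v))
      (nhdsWithin 0 (Set.Ioi 0)) (nhds (G w - G v - ν / 2 * sqnorm (w - v))) := by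
    have : Continuous (fun t : ℝ => G w - G v - ν / 2 * (1 - t) * sqnorm (w - v)) := by fun_prop
    have h2 := (this.tendsto 0).mono_left (nhdsWithin_le_nhds (s := Set.Ioi (0:ℝ)))
    simpa using h2
  refine le_of_tendsto_of_tendsto ht hr ?_
  filter_upwards [Ioc_mem_nhdsGT (zero_lt_one' ℝ)] with t ht
  have h := hGsc w v t ht.1.le ht.2
  have e : t • w + (1 - t) • v = v + t • (w - v) := by
    ext i; simp; ring
  rw [e] at h
  simp only [slope_def_field, Function.comp, zero_smul, add_zero, sub_zero]
  rw [div_le_iff₀ ht.1]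
  linarith

lemma aux_sqnorm_neg {ι : Type*} [Fintype ι] (a b : ι → ℝ) :
    sqnorm (a - b) = sqnorm (b - a) := by
  unfold sqnorm
  exact Finset.sum_congr rfl fun i _ => by simp only [Pi.sub_apply]; ring

lemma aux_lrip {M N : ℕ} (K : ℕ) (δ : ℝ) (A : Matrix (Fin M) (Fin N) ℝ) (hA : LRIP A K δ)
    (z : Fin N → ℝ) (hz : norm0 z ≤ K) : (1 - δ) * sqnorm z ≤ sqnorm (A.mulVec z) := by
  obtain ⟨ω, hω, hm⟩ : ∃ ω : Finset (Fin N), ω.card ≤ K ∧ ∀ i, i ∉ ω → z i = 0 :=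
    ⟨_, hz, by intro i hi; simpa using hi⟩
  have key : ∀ (inst : Fintype {i // i ∈ ω}) (f : Fin N → ℝ), (∀ i, z i = 0 → f i = 0) →
      (@Finset.univ _ inst).sum (fun i => f i) = ∑ i, f i := by
    intro inst f hf
    rw [Subsingleton.elim inst (Finset.Subtype.fintype ω), ← Finset.sum_subset (Finset.subset_univ ω)
      (fun i _ hi => hf i (hm i hi))]
    exact Finset.sum_coe_sort ω f
  have h := hA ω hω (fun i => z i)
  refine le_trans (le_of_eq ?_) (h.trans (le_of_eq ?_))
  · congr 1
    exact (key _ (fun i => z i ^ 2) (by intro i hi; simp [hi])).symm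
  · congr 1
    ext k
    exact key _ (fun i => A k i * z i) (by intro i hi; simp [hi])

lemma aux_grad {M N : ℕ} (G : (Fin M → ℝ) → ℝ) (hGdiff : Differentiable ℝ G)
    (A : Matrix (Fin M) (Fin N) ℝ) (x z : Fin N → ℝ) :
    ∑ i, fderiv ℝ (fun z => G (A.mulVec z)) x (Pi.single i 1) * z i
      = fderiv ℝ G (A.mulVec x) (A.mulVec z) := by
  have hL : HasFDerivAt (fun z => A.mulVec z) (LinearMap.toContinuousLinearMap A.mulVecLin) x :=
    (LinearMap.toContinuousLinearMap A.mulVecLin).hasFDerivAt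
  have hc := (hGdiff (A.mulVec x)).hasFDerivAt.comp x hL
  have hf : fderiv ℝ (fun z => G (A.mulVec z)) x = _ := hc.fderiv
  have hz : fderiv ℝ (fun z => G (A.mulVec z)) x z = fderiv ℝ G (A.mulVec x) (A.mulVec z) := by
    rw [hf]; rfl
  rw [← hz]
  conv_rhs => rw [pi_eq_sum_univ' z, map_sum]
  refine Finset.sum_congr rfl fun i _ => ?_
  rw [map_smul, smul_eq_mul, mul_comm]

/-- if `G` is differentiable and `ν`-strongly convex and `A` satisfies the LRIP
at order `K` with constant `δ < 1`, then `F = G ∘ A` satisfies restricted strong convexity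
with constant `ν(1-δ)`. -/
theorem stmt0 {M N : ℕ} (K : ℕ) (G : (Fin M → ℝ) → ℝ) (ν δ : ℝ)
    (hν : 0 < ν) (hδ : δ < 1)
    (hGdiff : Differentiable ℝ G)
    -- `ν`-strong convexity of `G` (w.r.t. the Euclidean norm)
    (hGsc : ∀ w v : Fin M → ℝ, ∀ t : ℝ, 0 ≤ t → t ≤ 1 →
      G (t • w + (1 - t) • v) ≤ t * G w + (1 - t) * G v - ν / 2 * t * (1 - t) * sqnorm (w - v))
    (A : Matrix (Fin M) (Fin N) ℝ) (hA : LRIP A K δ) :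
    ∀ x x' : Fin N → ℝ, norm0 (x - x') ≤ K →
      ν * (1 - δ) * sqnorm (x - x') ≤
        dotp (grad (fun z => G (A.mulVec z)) x - grad (fun z => G (A.mulVec z)) x') (x - x') := by
  intro x x' hx
  have h1 := aux_first_order G ν hGdiff hGsc (A.mulVec x) (A.mulVec x')
  have h2 := aux_first_order G ν hGdiff hGsc (A.mulVec x') (A.mulVec x)
  rw [aux_sqnorm_neg] at h2
  have h3 := aux_lrip K δ A hA (x - x') hx
  have h4 := mul_le_mul_of_nonneg_left h3 hν.le
  have e : dotp (grad (fun z => G (A.mulVec z)) x - grad (fun z => G (A.mulVec z)) x') (x - x')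
      = fderiv ℝ G (A.mulVec x) (A.mulVec (x - x'))
        - fderiv ℝ G (A.mulVec x') (A.mulVec (x - x')) := by
    rw [← aux_grad G hGdiff A x, ← aux_grad G hGdiff A x', ← Finset.sum_sub_distrib]
    unfold dotp grad
    exact Finset.sum_congr rfl fun i _ => by simp only [Pi.sub_apply]; ring
  rw [e]
  rw [Matrix.mulVec_sub] at h4 ⊢
  have h5 : fderiv ℝ G (A.mulVec x) (A.mulVec x' - A.mulVec x)
      = - fderiv ℝ G (A.mulVec x) (A.mulVec x - A.mulVec x') := by
    rw [← map_neg, neg_sub]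
  rw [h5] at h2
  linarith
end
end

section
/- Let F, Φ : ℝ^N → ℝ be convex and differentiable, and suppose F satisfies the BRSC property with respect to Φ, a convex set X ⊆ ℝ^N, and K, with constant C > 0. Let ω ⊆ {1,…,N} with #ω ≤ K, and set X_ω := {u ∈ ℝ^{#ω} : Z_ω(u) ∈ X}, F_ω(u) := F(Z_ω(u)), Φ_ω(u) := Φ(Z_ω(u)). Then: (i) the function u ↦ F_ω(u) − C·Φ_ω(u) is convex on X_ω; (ii) for all u, u' ∈ X_ω, F_ω(u) ≥ F_ω(u') + ⟨∇F_ω(u'), u − u'⟩ + C·(Φ_ω(u) − Φ_ω(u') − ⟨∇Φ_ω(u'), u − u'⟩). -/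
open Classical

noncomputable section

/-- `F` satisfies the Bregman Restricted Strong Convexity property with respect to `Φ`,
the set `X`, and the integer `K`, with constant `C`.  The set `D` stands for the common
interior of the domains of `F` and `Φ`. -/
def BRSC {n : Type*} [Fintype n] [DecidableEq n]
    (F Φ : (n → ℝ) → ℝ) (X D : Set (n → ℝ)) (K : ℕ) (C : ℝ) : Prop :=
  ∀ x ∈ X, ∀ x' ∈ D, x ≠ x' → norm0 (x - x') ≤ K →
    C * dotp (grad Φ x - grad Φ x') (x - x') ≤ dotp (grad F x - grad F x') (x - x')

/-- zero padding operator: the entries indexed by `σ` equal those of `u`, others are `0`. -/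
def zpad {N : ℕ} (σ : Finset (Fin N)) (u : {i // i ∈ σ} → ℝ) : Fin N → ℝ :=
  fun i => if h : i ∈ σ then u ⟨i, h⟩ else 0

theorem dotp_grad_aux {ι : Type*} [Fintype ι] [DecidableEq ι] (F : (ι → ℝ) → ℝ) (x y : ι → ℝ) :
    dotp (grad F x) y = fderiv ℝ F x y := by
  conv_rhs => rw [pi_eq_sum_univ' y]
  rw [map_sum]
  unfold dotp grad
  refine Finset.sum_congr rfl fun i _ => ?_
  rw [map_smul, smul_eq_mul, mul_comm]

theorem dotp_sub_aux {ι : Type*} [Fintype ι] (a b y : ι → ℝ) :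
    dotp (a - b) y = dotp a y - dotp b y := by
  simp [dotp, sub_mul, Finset.sum_sub_distrib]

/-- zero padding as a linear map -/
def zpadL {N : ℕ} (σ : Finset (Fin N)) : ({i // i ∈ σ} → ℝ) →ₗ[ℝ] (Fin N → ℝ) where
  toFun := zpad σ
  map_add' u v := by
    ext i; by_cases h : i ∈ σ <;> simp [zpad, h]
  map_smul' c u := by
    ext i; by_cases h : i ∈ σ <;> simp [zpad, h]

theorem norm0_zpad_aux {N : ℕ} (σ : Finset (Fin N)) (u : {i // i ∈ σ} → ℝ) :
    norm0 (zpad σ u) ≤ σ.card := by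
  unfold norm0
  refine Finset.card_le_card fun i hi => ?_
  by_contra h
  simp [zpad, h] at hi

theorem fderiv_zpad_aux {N : ℕ} (σ : Finset (Fin N)) (F : (Fin N → ℝ) → ℝ)
    (hF : Differentiable ℝ F) (u v : {i // i ∈ σ} → ℝ) :
    fderiv ℝ (fun w => F (zpad σ w)) u v = fderiv ℝ F (zpad σ u) (zpad σ v) := by
  have h1 : HasFDerivAt (fun w => zpad σ w) (zpadL σ).toContinuousLinearMap u :=
    (zpadL σ).toContinuousLinearMap.hasFDerivAt
  have h2 := (hF (zpad σ u)).hasFDerivAt.comp u h1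
  have h3 := h2.fderiv
  have h4 : (F ∘ fun w => zpad σ w) = fun w => F (zpad σ w) := rfl
  rw [h4] at h3
  rw [h3]
  rfl

theorem key_aux {N : ℕ} (F Φ : (Fin N → ℝ) → ℝ)
    (hFd : Differentiable ℝ F) (hΦd : Differentiable ℝ Φ)
    (X : Set (Fin N → ℝ)) (K : ℕ) (C : ℝ)
    (hBRSC : BRSC F Φ X Set.univ K C)
    (x d : Fin N → ℝ) (hx : x ∈ X) (hd : norm0 d ≤ K) :
    F x - C * Φ x + (fderiv ℝ F x d - C * fderiv ℝ Φ x d) ≤ F (x + d) - C * Φ (x + d) := by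
  by_cases hd0 : d = 0
  · subst hd0; simp
  have hl : ∀ t : ℝ, HasDerivAt (fun t : ℝ => x + t • d) d t := fun t => by
    simpa using ((hasDerivAt_id t).smul_const d).const_add x
  have hg : ∀ t : ℝ, HasDerivAt (fun t : ℝ => F (x + t • d) - C * Φ (x + t • d))
      (fderiv ℝ F (x + t • d) d - C * fderiv ℝ Φ (x + t • d) d) t := fun t =>
    ((hFd _).hasFDerivAt.comp_hasDerivAt t (hl t)).sub
      (((hΦd _).hasFDerivAt.comp_hasDerivAt t (hl t)).const_mul C)
  obtain ⟨c, hc, he⟩ := exists_hasDerivAt_eq_slope _ _ (zero_lt_one' ℝ)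
    (fun t _ => (hg t).continuousAt.continuousWithinAt) (fun t _ => hg t)
  simp only [one_smul, zero_smul, add_zero, sub_zero, div_one] at he
  have hsub : x - (x + c • d) = (-c) • d := by simp
  have hn : norm0 ((-c) • d) ≤ K := by
    refine le_trans (Finset.card_le_card fun i hi => ?_) hd
    simp at hi ⊢
    tauto
  have hne : x ≠ x + c • d := by
    intro h
    have : c • d = 0 := by simpa using h
    rcases smul_eq_zero.1 this with h | h
    · exact hc.1.ne' h
    · exact hd0 h
  have hb := hBRSC x hx (x + c • d) (Set.mem_univ _) hne (by rw [hsub]; exact hn)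
  rw [hsub, dotp_sub_aux, dotp_sub_aux] at hb
  simp only [dotp_grad_aux, map_smul, smul_eq_mul] at hb
  have : fderiv ℝ F x d - C * fderiv ℝ Φ x d ≤
      fderiv ℝ F (x + c • d) d - C * fderiv ℝ Φ (x + c • d) d := by
    refine le_of_mul_le_mul_left ?_ hc.1
    linarith
  linarith

/-- restriction of BRSC to a subset `ω` of the variables. -/
theorem stmt2 {N : ℕ} (F Φ : (Fin N → ℝ) → ℝ)
    (hFc : ConvexOn ℝ Set.univ F) (hΦc : ConvexOn ℝ Set.univ Φ)
    (hFd : Differentiable ℝ F) (hΦd : Differentiable ℝ Φ)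
    (X : Set (Fin N → ℝ)) (hX : Convex ℝ X) (K : ℕ) (C : ℝ) (hC : 0 < C)
    (hBRSC : BRSC F Φ X Set.univ K C)
    (ω : Finset (Fin N)) (hω : ω.card ≤ K) :
    -- (i) `F_ω - C Φ_ω` is convex on `X_ω`
    ConvexOn ℝ {u : {i // i ∈ ω} → ℝ | zpad ω u ∈ X}
      (fun u => F (zpad ω u) - C * Φ (zpad ω u)) ∧
    -- (ii) the strengthened gradient inequality holds on `X_ω`
    (∀ u ∈ {u : {i // i ∈ ω} → ℝ | zpad ω u ∈ X},
      ∀ u' ∈ {u : {i // i ∈ ω} → ℝ | zpad ω u ∈ X},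
        F (zpad ω u') + dotp (grad (fun v => F (zpad ω v)) u') (u - u')
            + C * (Φ (zpad ω u) - Φ (zpad ω u')
                - dotp (grad (fun v => Φ (zpad ω v)) u') (u - u'))
          ≤ F (zpad ω u)) := by
  have hsub : ∀ u v : {i // i ∈ ω} → ℝ, zpad ω (u - v) = zpad ω u - zpad ω v :=
    fun u v => (zpadL ω).map_sub u v
  have hlin : ∀ (a b : ℝ) (u v : {i // i ∈ ω} → ℝ),
      zpad ω (a • u + b • v) = a • zpad ω u + b • zpad ω v := fun a b u v => by
    have := (zpadL ω).map_add (a • u) (b • v)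
    rw [map_smul, map_smul] at this
    exact this
  have key : ∀ u v : {i // i ∈ ω} → ℝ, zpad ω u ∈ X →
      F (zpad ω u) - C * Φ (zpad ω u) + (fderiv ℝ F (zpad ω u) (zpad ω v - zpad ω u)
        - C * fderiv ℝ Φ (zpad ω u) (zpad ω v - zpad ω u))
        ≤ F (zpad ω v) - C * Φ (zpad ω v) := fun u v hu => by
    have := key_aux F Φ hFd hΦd X K C hBRSC (zpad ω u) (zpad ω (v - u)) hu
      ((norm0_zpad_aux ω _).trans hω)
    rw [hsub, add_sub_cancel] at this
    exact this
  refine ⟨⟨?_, ?_⟩, ?_⟩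
  · intro u hu v hv a b ha hb hab
    simp only [Set.mem_setOf_eq] at hu hv ⊢
    rw [hlin]
    exact hX hu hv ha hb hab
  · intro u hu v hv a b ha hb hab
    simp only [Set.mem_setOf_eq] at hu hv
    have hm : zpad ω (a • u + b • v) ∈ X := by
      rw [hlin]
      exact hX hu hv ha hb hab
    have h1 := mul_le_mul_of_nonneg_left (key _ u hm) ha
    have h2 := mul_le_mul_of_nonneg_left (key _ v hm) hb
    have hz : a • (zpad ω u - zpad ω (a • u + b • v))
        + b • (zpad ω v - zpad ω (a • u + b • v)) = 0 := by
      rw [hlin]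
      obtain rfl : b = 1 - a := by linarith
      module
    have hF0 := congrArg (fderiv ℝ F (zpad ω (a • u + b • v))) hz
    have hΦ0 := congrArg (fderiv ℝ Φ (zpad ω (a • u + b • v))) hz
    rw [map_add, map_smul, map_smul, map_zero, smul_eq_mul, smul_eq_mul] at hF0 hΦ0
    simp only [smul_eq_mul]
    generalize zpad ω (a • u + b • v) = m at *
    obtain rfl : b = 1 - a := by linarith
    linear_combination h1 + h2 - hF0 + C * hΦ0
  · intro u hu u' hu'
    have h := key u' u hu'
    rw [dotp_grad_aux, dotp_grad_aux, fderiv_zpad_aux ω F hFd, fderiv_zpad_aux ω Φ hΦd, hsub]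
    linarith
end
end

section
/- Consider the Kullback–Leibler fidelity F with N ≥ 1, y ∈ ℤ^M_{≥0}, b ∈ ℝ^M_{>0} and A ∈ ℝ^{M×N}_{≥0}. For any nonempty compact set X ⊆ ℝ^N_{≥0} and any constant C > 0, there exist x ∈ X and x' ∈ ℝ^N_{≥0} with x ≠ x' and ‖x − x'‖₀ ≤ 1 such that ⟨∇F(x) − ∇F(x'), x − x'⟩ < C‖x − x'‖₂². Consequently, for every K ≥ 1, F does not satisfy the BRSC property with respect to Φ = (1/2)‖·‖₂², X, and K with any positive constant. -/
open Classical

noncomputable section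

/-- the Kullback--Leibler fidelity term `F(x) = Σ_j ([Ax]_j + b_j + y_j log(y_j/([Ax]_j+b_j)) - y_j)`
(with the convention `y_j log (y_j / ·) = 0` when `y_j = 0`, automatic here since `0 * _ = 0`). -/
def FKL {M N : ℕ} (A : Matrix (Fin M) (Fin N) ℝ) (b : Fin M → ℝ) (y : Fin M → ℕ)
    (x : Fin N → ℝ) : ℝ :=
  ∑ j, (A.mulVec x j + b j + (y j : ℝ) * Real.log ((y j : ℝ) / (A.mulVec x j + b j)) - (y j : ℝ))

lemma mulVec_nn {M N : ℕ} (A : Matrix (Fin M) (Fin N) ℝ) (hA : ∀ j i, 0 ≤ A j i)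
    (x : Fin N → ℝ) (hx : ∀ i, 0 ≤ x i) (j : Fin M) : 0 ≤ A.mulVec x j := by
  simp only [Matrix.mulVec, dotProduct]
  exact Finset.sum_nonneg fun k _ => mul_nonneg (hA j k) (hx k)

lemma hasFDerivAt_FKL {M N : ℕ} (A : Matrix (Fin M) (Fin N) ℝ) (hA : ∀ j i, 0 ≤ A j i)
    (b : Fin M → ℝ) (hb : ∀ j, 0 < b j) (y : Fin M → ℕ) (x : Fin N → ℝ) (hx : ∀ i, 0 ≤ x i)
    (i : Fin N) :
    grad (FKL A b y) x i = ∑ j, (1 - (y j : ℝ) / (A.mulVec x j + b j)) * A j i := by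
  have hpos : ∀ j, 0 < A.mulVec x j + b j := fun j =>
    add_pos_of_nonneg_of_pos (mulVec_nn A hA x hx j) (hb j)
  let L : Fin M → ((Fin N → ℝ) →L[ℝ] ℝ) := fun j =>
    LinearMap.toContinuousLinearMap ((LinearMap.proj j) ∘ₗ A.mulVecLin)
  have hL : ∀ j z, L j z = A.mulVec z j := fun j z => rfl
  have h1 : ∀ j, HasDerivAt (fun u : ℝ => u + b j + (y j : ℝ) * Real.log ((y j : ℝ) / (u + b j))
      - (y j : ℝ)) (1 - (y j : ℝ) / (A.mulVec x j + b j)) (L j x) := by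
    intro j
    have hp := hpos j
    rw [hL]
    set u0 := A.mulVec x j
    have hid : HasDerivAt (fun u : ℝ => u + b j) 1 u0 := (hasDerivAt_id u0).add_const (b j)
    by_cases hy : (y j : ℝ) = 0
    · simpa [hy] using hid
    · have hd : HasDerivAt (fun u : ℝ => (y j : ℝ) / (u + b j))
          ((0 * (u0 + b j) - (y j : ℝ) * 1) / (u0 + b j) ^ 2) u0 :=
        (hasDerivAt_const u0 (y j : ℝ)).div hid hp.ne'
      have hl := hd.log (div_ne_zero hy hp.ne')
      have := (hid.add (hl.const_mul (y j : ℝ))).sub_const (y j : ℝ)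
      refine this.congr_deriv ?_
      have hp' := hp.ne'
      field_simp
      ring
  have h2 : HasFDerivAt (FKL A b y)
      (∑ j, (1 - (y j : ℝ) / (A.mulVec x j + b j)) • L j) x := by
    have := HasFDerivAt.fun_sum (u := Finset.univ)
      (fun j _ => (h1 j).comp_hasFDerivAt x (L j).hasFDerivAt)
    exact this
  unfold grad
  rw [h2.fderiv]
  simp [hL]

lemma grad_half {N : ℕ} (x : Fin N → ℝ) :
    grad (fun x : Fin N → ℝ => (1 / 2) * sqnorm x) x = x := by
  have h : HasFDerivAt (fun x : Fin N → ℝ => (1 / 2) * sqnorm x)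
      ((1 / 2 : ℝ) • ∑ i, (2 * x i) • (ContinuousLinearMap.proj i : (Fin N → ℝ) →L[ℝ] ℝ)) x := by
    unfold sqnorm
    refine HasFDerivAt.const_mul (HasFDerivAt.fun_sum fun i _ => ?_) _
    have := (ContinuousLinearMap.proj (R := ℝ) (φ := fun _ : Fin N => ℝ) i).hasFDerivAt (x := x)
    simpa using this.pow 2
  funext i
  unfold grad
  rw [h.fderiv]
  simp [Pi.single_apply]

lemma key {M N : ℕ} (hN : 0 < N)
    (A : Matrix (Fin M) (Fin N) ℝ) (hA : ∀ j i, 0 ≤ A j i)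
    (b : Fin M → ℝ) (hb : ∀ j, 0 < b j) (y : Fin M → ℕ)
    (x : Fin N → ℝ) (hx : ∀ i, 0 ≤ x i) (C : ℝ) (hC : 0 < C) :
    ∃ x' : Fin N → ℝ, (∀ i, 0 ≤ x' i) ∧ x ≠ x' ∧
        norm0 (x - x') ≤ 1 ∧
        dotp (grad (FKL A b y) x - grad (FKL A b y) x') (x - x') < C * sqnorm (x - x') := by
  let i0 : Fin N := ⟨0, hN⟩
  set B : ℝ := ∑ j, (y j : ℝ) / b j * A j i0 with hB
  have hB0 : 0 ≤ B := Finset.sum_nonneg fun j _ =>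
    mul_nonneg (div_nonneg (Nat.cast_nonneg _) (hb j).le) (hA j i0)
  set t : ℝ := B / C + 1 with ht
  have ht0 : 0 < t := by positivity
  have hCt : B < C * t := by rw [ht, mul_add, mul_div_cancel₀ _ hC.ne']; linarith
  set x' : Fin N → ℝ := x + Pi.single i0 t with hx'
  have hd : x - x' = Pi.single i0 (-t) := by
    rw [hx', Pi.single_neg]; simp
  have hx'0 : ∀ i, 0 ≤ x' i := by
    intro i
    have : 0 ≤ (Pi.single i0 t : Fin N → ℝ) i := by
      rw [Pi.single_apply]; split_ifs <;> linarith
    exact add_nonneg (hx i) this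
  refine ⟨x', hx'0, ?_, ?_, ?_⟩
  · intro h
    have := congrFun hd i0
    rw [← h] at this
    simp at this
    linarith
  · rw [hd]
    unfold norm0
    refine (Finset.card_le_card (t := {i0}) ?_).trans (by simp)
    intro i hi
    by_contra hne
    simp only [Finset.mem_singleton] at hne
    simp [hne] at hi
  · have hs : sqnorm (x - x') = t ^ 2 := by
      rw [hd]; unfold sqnorm
      rw [Finset.sum_eq_single i0] <;> simp +contextual [Pi.single_apply]
    have hdt : dotp (grad (FKL A b y) x - grad (FKL A b y) x') (x - x')
        = t * (grad (FKL A b y) x' i0 - grad (FKL A b y) x i0) := by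
      rw [hd]; unfold dotp
      rw [Finset.sum_eq_single i0]
      · simp; ring
      · intro i _ hi; simp [Pi.single_apply, hi]
      · simp
    rw [hs, hdt, hasFDerivAt_FKL A hA b hb y x hx, hasFDerivAt_FKL A hA b hb y x' hx'0,
      ← Finset.sum_sub_distrib]
    have hle : ∑ j, ((1 - (y j : ℝ) / (A.mulVec x' j + b j)) * A j i0
        - (1 - (y j : ℝ) / (A.mulVec x j + b j)) * A j i0) ≤ B := by
      refine Finset.sum_le_sum fun j _ => ?_
      rw [← sub_mul]
      refine mul_le_mul_of_nonneg_right ?_ (hA j i0)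
      have e1 : 0 ≤ A.mulVec x j := mulVec_nn A hA x hx j
      have e2 : 0 ≤ A.mulVec x' j := mulVec_nn A hA x' hx'0 j
      have hbj := hb j
      have f1 : 0 ≤ (y j : ℝ) / (A.mulVec x' j + b j) := by positivity
      have f2 : (y j : ℝ) / (A.mulVec x j + b j) ≤ (y j : ℝ) / b j :=
        div_le_div_of_nonneg_left (Nat.cast_nonneg _) hbj (by linarith)
      linarith
    nlinarith

/-- the KL fidelity does not satisfy the RSC/BRSC property with
`Φ = (1/2)‖·‖₂²` on any nonempty compact `X ⊆ ℝ^N_{≥0}`. -/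
theorem stmt3 {M N : ℕ} (hN : 0 < N)
    (A : Matrix (Fin M) (Fin N) ℝ) (hA : ∀ j i, 0 ≤ A j i)
    (b : Fin M → ℝ) (hb : ∀ j, 0 < b j) (y : Fin M → ℕ)
    (X : Set (Fin N → ℝ)) (hXsub : X ⊆ {x | ∀ i, 0 ≤ x i})
    (hXne : X.Nonempty) (hXcomp : IsCompact X) :
    (∀ C : ℝ, 0 < C → ∃ x ∈ X, ∃ x' : Fin N → ℝ, (∀ i, 0 ≤ x' i) ∧ x ≠ x' ∧
        norm0 (x - x') ≤ 1 ∧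
        dotp (grad (FKL A b y) x - grad (FKL A b y) x') (x - x') < C * sqnorm (x - x')) ∧
    (∀ K : ℕ, 1 ≤ K → ∀ C : ℝ, 0 < C →
        ¬ BRSC (FKL A b y) (fun x => (1 / 2) * sqnorm x) X {x | ∀ i, 0 ≤ x i} K C) := by
  have H : ∀ C : ℝ, 0 < C → ∃ x ∈ X, ∃ x' : Fin N → ℝ, (∀ i, 0 ≤ x' i) ∧ x ≠ x' ∧
        norm0 (x - x') ≤ 1 ∧
        dotp (grad (FKL A b y) x - grad (FKL A b y) x') (x - x') < C * sqnorm (x - x') := by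
    intro C hC
    obtain ⟨x, hx⟩ := hXne
    exact ⟨x, hx, key hN A hA b hb y x (hXsub hx) C hC⟩
  refine ⟨H, ?_⟩
  intro K hK C hC hBR
  obtain ⟨x, hx, x', hx', hne, h0, hlt⟩ := H C hC
  have h := hBR x hx x' hx' hne (h0.trans hK)
  rw [grad_half, grad_half] at h
  have e : dotp (x - x') (x - x') = sqnorm (x - x') := by
    unfold dotp sqnorm
    exact Finset.sum_congr rfl fun i _ => (sq _).symm
  rw [e] at h
  linarith
end
end

section
/- Consider the Kullback–Leibler fidelity F with y ∈ ℤ^M_{≥0}, b ∈ ℝ^M_{>0} and A ∈ ℝ^{M×N}_{≥0}. Let σ_y := {j : y_j ≠ 0} and let Ã be the submatrix of A formed by the rows indexed by σ_y. Let Φ(x) := Σ_i −log(x_i + η_i) with η_i > 0 for all i. Assume Ã satisfies the LRIP at order K with constant δ < 1, and let X ⊆ ℝ^N_{≥0} be compact. Then there exists a constant C > 0 such that for all x ∈ X and all x' ∈ ℝ^N_{≥0} with x ≠ x' and ‖x − x'‖₀ ≤ K, one has ⟨∇F(x) − ∇F(x'), x − x'⟩ ≥ C·⟨∇Φ(x)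 − ∇Φ(x'), x − x'⟩. -/
open Classical

noncomputable section

/-- (smoothed) Burg entropy `Φ(x) = Σ_i -log(x_i + η_i)`. -/
def PhiBurg {N : ℕ} (η : Fin N → ℝ) (x : Fin N → ℝ) : ℝ := ∑ i, -Real.log (x i + η i)

lemma aux_dotp_grad {ι : Type*} [Fintype ι] [DecidableEq ι] (F : (ι → ℝ) → ℝ) (x v : ι → ℝ) :
    dotp (grad F x) v = fderiv ℝ F x v := by
  conv_rhs => rw [pi_eq_sum_univ' v]
  simp only [dotp, grad, map_sum, map_smul, smul_eq_mul]
  refine Finset.sum_congr rfl fun i _ => ?_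
  rw [mul_comm]

lemma aux_kl1 (y : ℕ) (z : ℝ) (hz : 0 < z) :
    HasDerivAt (fun z : ℝ => z + (y : ℝ) * Real.log ((y : ℝ) / z) - (y : ℝ)) (1 - y / z) z := by
  rcases Nat.eq_zero_or_pos y with rfl | hy
  · simpa using hasDerivAt_id' z
  · have hy' : (0 : ℝ) < y := by exact_mod_cast hy
    have h1 : HasDerivAt (fun z : ℝ => (y : ℝ) / z) (-(y : ℝ) / z ^ 2) z := by
      simpa [div_eq_mul_inv] using (hasDerivAt_inv hz.ne').const_mul (y : ℝ)
    have h2 := ((hasDerivAt_id z).add ((h1.log (by positivity)).const_mul (y : ℝ))).sub_const (y : ℝ)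
    refine h2.congr_deriv ?_
    field_simp
    ring

lemma aux_dF {M N : ℕ} (A : Matrix (Fin M) (Fin N) ℝ) (b : Fin M → ℝ) (y : Fin M → ℕ)
    (x v : Fin N → ℝ) (hx : ∀ j, 0 < A.mulVec x j + b j) :
    fderiv ℝ (FKL A b y) x v = ∑ j, (1 - y j / (A.mulVec x j + b j)) * A.mulVec v j := by
  have hlin : ∀ j, HasFDerivAt (fun x : Fin N → ℝ => A.mulVec x j + b j)
      ((ContinuousLinearMap.proj j).comp (LinearMap.toContinuousLinearMap A.mulVecLin)) x := by
    intro j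
    exact (((ContinuousLinearMap.proj (R := ℝ) (φ := fun _ : Fin M => ℝ) j).comp
      (LinearMap.toContinuousLinearMap A.mulVecLin)).hasFDerivAt (x := x)).add_const (b j)
  have h := HasFDerivAt.fun_sum (u := Finset.univ) fun j _ => (aux_kl1 (y j) _ (hx j)).comp_hasFDerivAt x (hlin j)
  have h' := HasFDerivAt.fderiv (f := FKL A b y) h
  rw [h']
  simp

lemma aux_dPhi {N : ℕ} (η : Fin N → ℝ) (x v : Fin N → ℝ) (hx : ∀ j, 0 < x j + η j) :
    fderiv ℝ (PhiBurg η) x v = ∑ i, (- (1 / (x i + η i))) * v i := by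
  have h := HasFDerivAt.fun_sum (u := Finset.univ) fun (i : Fin N) _ =>
      (((hasFDerivAt_apply (𝕜 := ℝ) i x).add_const (η i)).log (hx i).ne').neg
  have h' := HasFDerivAt.fderiv (f := PhiBurg η) h
  rw [h']
  simp

lemma aux_dotp_sub {ι : Type*} [Fintype ι] (a b v : ι → ℝ) :
    dotp (a - b) v = dotp a v - dotp b v := by
  simp [dotp, sub_mul]

lemma aux_lrip_s4 {M N : ℕ} (K : ℕ) (A : Matrix (Fin M) (Fin N) ℝ) (y : Fin M → ℕ) (δ : ℝ)
    (hLRIP : LRIP (A.submatrix (fun j : {j // y j ≠ 0} => (j : Fin M)) id) K δ)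
    (d : Fin N → ℝ) (hd : norm0 d ≤ K) :
    (1 - δ) * sqnorm d ≤ ∑ j, if y j ≠ 0 then (A.mulVec d j) ^ 2 else 0 := by
  obtain ⟨ω, hω⟩ : ∃ ω : Finset (Fin N), ω = Finset.univ.filter fun i => d i ≠ 0 := ⟨_, rfl⟩
  have hc : ω.card ≤ K := by rw [hω]; exact hd
  have h := hLRIP ω hc (fun i => d i)
  have key : ∀ (inst : Fintype {i // i ∈ ω}) (f : Fin N → ℝ), (∀ i, d i = 0 → f i = 0) →
      (@Finset.univ _ inst).sum (fun i : {i // i ∈ ω} => f i) = ∑ i, f i := by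
    intro inst f hf
    rw [← Finset.sum_subtype (p := fun i => i ∈ ω) ω (by simp) f]
    refine Finset.sum_subset (Finset.subset_univ _) fun i _ hi => hf i ?_
    simpa [hω] using hi
  unfold sqnorm at h
  rw [key _ (fun i => d i ^ 2) (fun i hi => by simp [hi])] at h
  refine h.trans_eq ?_
  rw [← Finset.sum_filter, Finset.sum_subtype (p := fun j => y j ≠ 0) _ (by simp)
    (fun j => A.mulVec d j ^ 2)]
  refine Finset.sum_congr rfl fun j _ => ?_
  congr 1
  exact key _ (fun i => A j i * d i) (fun i hi => by simp [hi])

lemma aux_bdd {n : ℕ} (f : Fin n → ℝ) : ∃ B : ℝ, 0 < B ∧ ∀ i, f i ≤ B := by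
  refine ⟨∑ i, |f i| + 1, by positivity, fun i => ?_⟩
  have := Finset.single_le_sum (f := fun i => |f i|) (fun i _ => abs_nonneg _) (Finset.mem_univ i)
  have h2 := le_abs_self (f i)
  linarith

/-- the KL fidelity satisfies BRSC w.r.t. the Burg entropy on compact sets,
under an LRIP condition on the rows of `A` indexed by the support of `y`. -/
theorem stmt4 {M N : ℕ} (K : ℕ)
    (A : Matrix (Fin M) (Fin N) ℝ) (hA : ∀ j i, 0 ≤ A j i)
    (b : Fin M → ℝ) (hb : ∀ j, 0 < b j) (y : Fin M → ℕ)
    (η : Fin N → ℝ) (hη : ∀ i, 0 < η i)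
    (δ : ℝ) (hδ : δ < 1)
    (hLRIP : LRIP (A.submatrix (fun j : {j // y j ≠ 0} => (j : Fin M)) id) K δ)
    (X : Set (Fin N → ℝ)) (hXsub : X ⊆ {x | ∀ i, 0 ≤ x i}) (hXcomp : IsCompact X) :
    ∃ C : ℝ, 0 < C ∧ ∀ x ∈ X, ∀ x' : Fin N → ℝ, (∀ i, 0 ≤ x' i) → x ≠ x' →
      norm0 (x - x') ≤ K →
      C * dotp (grad (PhiBurg η) x - grad (PhiBurg η) x') (x - x')
        ≤ dotp (grad (FKL A b y) x - grad (FKL A b y) x') (x - x') := by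
  obtain ⟨B, hB0, hB⟩ : ∃ B : ℝ, 0 < B ∧ ∀ x ∈ X, ∀ i, x i ≤ B := by
    obtain ⟨R, hR⟩ := hXcomp.isBounded.exists_norm_le
    refine ⟨|R| + 1, by positivity, fun x hx i => ?_⟩
    have h1 := hR x hx
    have h2 := norm_le_pi_norm x i
    rw [Real.norm_eq_abs] at h2
    linarith [le_abs_self (x i), le_abs_self R]
  obtain ⟨h, hh0, hh⟩ : ∃ h : ℝ, 0 < h ∧ ∀ i, h ≤ η i := by
    obtain ⟨H, H0, hH⟩ := aux_bdd (fun i => (η i)⁻¹)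
    exact ⟨H⁻¹, by positivity, fun i => inv_le_of_inv_le₀ (hη i) (hH i)⟩
  obtain ⟨a, ha0, ha⟩ := aux_bdd (fun j => ∑ i, A j i)
  obtain ⟨β, hβ0, hβ⟩ := aux_bdd b
  obtain ⟨Q, hQ⟩ : ∃ Q, Q = a * (B + 1) + β := ⟨_, rfl⟩
  obtain ⟨P, hP⟩ : ∃ P, P = (1 + B) / h + 1 := ⟨_, rfl⟩
  have hQ0 : 0 < Q := by rw [hQ]; positivity
  have hP0 : 0 < P := by rw [hP]; positivity
  have hδ' : 0 < 1 - δ := by linarith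
  have hAub : ∀ (w : Fin N → ℝ) (c : ℝ), 0 ≤ c → (∀ i, w i ≤ c) → ∀ j, A.mulVec w j ≤ a * c := by
    intro w c hc hw j
    calc A.mulVec w j = ∑ i, A j i * w i := rfl
      _ ≤ ∑ i, A j i * c := Finset.sum_le_sum fun i _ => mul_le_mul_of_nonneg_left (hw i) (hA j i)
      _ = (∑ i, A j i) * c := by rw [Finset.sum_mul]
      _ ≤ a * c := mul_le_mul_of_nonneg_right (ha j) hc
  have hApos : ∀ w : Fin N → ℝ, (∀ i, 0 ≤ w i) → ∀ j, 0 < A.mulVec w j + b j := by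
    intro w hw j
    have : 0 ≤ ∑ i, A j i * w i := Finset.sum_nonneg fun i _ => mul_nonneg (hA j i) (hw i)
    exact add_pos_of_nonneg_of_pos this (hb j)
  refine ⟨(1 - δ) / Q ^ 2 / (N * (P / h) + 1), by positivity, ?_⟩
  intro x hxX x' hx' _ hK
  have hx : ∀ i, 0 ≤ x i := hXsub hxX
  have hxη : ∀ i, 0 < x i + η i := fun i => by linarith [hx i, hη i]
  have hxη' : ∀ i, 0 < x' i + η i := fun i => by linarith [hx' i, hη i]
  obtain ⟨d, hd⟩ : ∃ d, d = x - x' := ⟨_, rfl⟩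
  obtain ⟨e, he⟩ : ∃ e, e = Real.sqrt (sqnorm d) := ⟨_, rfl⟩
  have hsq0 : 0 ≤ sqnorm d := Finset.sum_nonneg fun i _ => sq_nonneg _
  have he0 : 0 ≤ e := he ▸ Real.sqrt_nonneg _
  have he2 : e ^ 2 = sqnorm d := by rw [he, Real.sq_sqrt hsq0]
  have hde : ∀ i, |d i| ≤ e := by
    intro i
    rw [he]
    exact Real.abs_le_sqrt (Finset.single_le_sum (f := fun i => d i ^ 2)
      (fun i _ => sq_nonneg _) (Finset.mem_univ i))
  have hdi : ∀ i, d i = x i - x' i := fun i => by rw [hd]; rfl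
  have hAd : ∀ j, A.mulVec d j = A.mulVec x j - A.mulVec x' j := fun j => by
    rw [hd, Matrix.mulVec_sub]; rfl
  rw [← hd] at hK ⊢
  rw [aux_dotp_sub, aux_dotp_sub, aux_dotp_grad, aux_dotp_grad, aux_dotp_grad, aux_dotp_grad,
    aux_dPhi _ _ _ hxη, aux_dPhi _ _ _ hxη', aux_dF _ _ _ _ _ (hApos x hx),
    aux_dF _ _ _ _ _ (hApos x' hx'), ← Finset.sum_sub_distrib, ← Finset.sum_sub_distrib]
  have hL : ∑ i, (-(1 / (x i + η i)) * d i - -(1 / (x' i + η i)) * d i)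
      ≤ N * (P / h) * (e ^ 2 / (1 + e)) := by
    have : ∀ i ∈ Finset.univ, (-(1 / (x i + η i)) * d i - -(1 / (x' i + η i)) * d i)
        ≤ P / h * (e ^ 2 / (1 + e)) := by
      intro i _
      have p1 := hxη i
      have p2 := hxη' i
      have e1 : (-(1 / (x i + η i)) * d i - -(1 / (x' i + η i)) * d i)
          = |d i| ^ 2 / ((x i + η i) * (x' i + η i)) := by
        rw [sq_abs]
        have := hdi i
        field_simp
        rw [this]; ring
      have i1 : h ≤ x i + η i := by linarith [hh i, hx i]
      have i2 : (1 + |d i|) / P ≤ x' i + η i := by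
        rw [div_le_iff₀ hP0, hP]
        have q1 : |d i| ≤ B + x' i := by
          rw [hdi i, abs_le]
          constructor <;> linarith [hx i, hx' i, hB x hxX i]
        have q2 : 1 + B ≤ (x' i + η i) * ((1 + B) / h) := by
          rw [← mul_div_assoc, le_div_iff₀ hh0, mul_comm]
          exact mul_le_mul_of_nonneg_right (by linarith [hx' i, hh i]) (by linarith)
        linarith [hη i]
      have t0 := abs_nonneg (d i)
      have t1 := hde i
      rw [e1]
      calc |d i| ^ 2 / ((x i + η i) * (x' i + η i))
          ≤ |d i| ^ 2 / (h * ((1 + |d i|) / P)) := by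
            apply div_le_div_of_nonneg_left (by positivity) (by positivity)
            exact mul_le_mul i1 i2 (by positivity) p1.le
        _ = P / h * (|d i| ^ 2 / (1 + |d i|)) := by field_simp
        _ ≤ P / h * (e ^ 2 / (1 + e)) := by
            apply mul_le_mul_of_nonneg_left _ (by positivity)
            rw [div_le_div_iff₀ (by positivity) (by positivity)]
            have u1 : |d i| ^ 2 ≤ e ^ 2 := by gcongr
            have u2 : |d i| * e * |d i| ≤ |d i| * e * e := by gcongr
            nlinarith
    refine (Finset.sum_le_sum this).trans_eq ?_
    simp
    ring
  have hR : (1 - δ) / Q ^ 2 * (e ^ 2 / (1 + e)) ≤ ∑ j, ((1 - y j / (A.mulVec x j + b j)) * A.mulVec d j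
      - (1 - y j / (A.mulVec x' j + b j)) * A.mulVec d j) := by
    have hl := aux_lrip_s4 K A y δ hLRIP d hK
    calc (1 - δ) / Q ^ 2 * (e ^ 2 / (1 + e)) = ((1 - δ) * sqnorm d) / (Q ^ 2 * (1 + e)) := by
          rw [he2]; field_simp
      _ ≤ (∑ j, if y j ≠ 0 then (A.mulVec d j) ^ 2 else 0) / (Q ^ 2 * (1 + e)) := by gcongr
      _ = ∑ j, (if y j ≠ 0 then (A.mulVec d j) ^ 2 else 0) / (Q ^ 2 * (1 + e)) := by
          rw [Finset.sum_div]
      _ ≤ _ := by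
          refine Finset.sum_le_sum fun j _ => ?_
          have p1 := hApos x hx j
          have p2 := hApos x' hx' j
          have e1 : ((1 - y j / (A.mulVec x j + b j)) * A.mulVec d j
              - (1 - y j / (A.mulVec x' j + b j)) * A.mulVec d j)
              = y j * (A.mulVec d j) ^ 2 / ((A.mulVec x j + b j) * (A.mulVec x' j + b j)) := by
            have := hAd j
            field_simp
            rw [this]; ring
          rw [e1]
          split_ifs with hy
          · have y1 : (1 : ℝ) ≤ y j := by exact_mod_cast Nat.one_le_iff_ne_zero.mpr hy
            have z1 : A.mulVec x j + b j ≤ Q := by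
              have := hAub x B hB0.le (hB x hxX) j
              have := hβ j
              rw [hQ]; linarith
            have z2 : A.mulVec x' j + b j ≤ Q * (1 + e) := by
              have := hAub x' (B + e) (by positivity) (fun i => by
                have := neg_le_of_abs_le (hde i)
                have := hB x hxX i
                linarith [hdi i]) j
              have := hβ j
              have : 0 ≤ (a * B + β) * e := by positivity
              rw [hQ]; linarith
            apply div_le_div₀ (by positivity) _ (by positivity) _
            · exact le_mul_of_one_le_left (sq_nonneg _) y1
            · calc _ ≤ Q * (Q * (1 + e)) := mul_le_mul z1 z2 p2.le hQ0.le
                _ = _ := by ring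
          · rw [zero_div]; positivity
  refine le_trans ?_ hR
  have hg : 0 ≤ e ^ 2 / (1 + e) := by positivity
  rw [div_mul_eq_mul_div, div_le_iff₀ (by positivity), mul_assoc]
  apply mul_le_mul_of_nonneg_left _ (by positivity)
  linarith
end
end

section
/- Let C be ℝ or ℝ_{≥0}, let ψ : C → ℝ be strictly convex, twice differentiable on int(C), with x ↦ ψ'(x)x − ψ(x) coercive and ψ' odd when C = ℝ (ψ'(0) ≥ 0 when C = ℝ_{≥0}); let α > 0 and C_K ∈ (0,1). Suppose x ∈ C and z ∈ ∂h(x) satisfy |z| > (ψ'(α) − ψ'(0))/C_K + ψ'(0). Then for every x' ∈ C with x' ≠ x and every z' ∈ ∂h(x'), one has (z − z')(x − x') > (1 − C_K)(ψ'(x) − ψ'(x'))(x − x'). -/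
open Classical

noncomputable section

/-- the subdifferential `∂h` of `h = β_ψ + ψ` (Clarke subdifferential, closed form). -/
def subdiffH (𝒞 : Set ℝ) (dψ : ℝ → ℝ) (α : ℝ) (t : ℝ) : Set ℝ :=
  if 𝒞 = Set.univ then
    if t = 0 then Set.Icc (-(dψ α)) (dψ α)
    else if |t| ≤ α then {Real.sign t * dψ α}
    else {dψ t}
  else
    if t ≤ α then {dψ α} else {dψ t}

/-- Lemma for large `|z|`. -/
theorem stmt6
    (𝒞 : Set ℝ) (h𝒞 : 𝒞 = Set.univ ∨ 𝒞 = Set.Ici 0)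
    (ψ dψ : ℝ → ℝ) (α CK : ℝ) (hα : 0 < α) (hCK0 : 0 < CK) (hCK1 : CK < 1)
    -- `ψ` strictly convex with derivative `dψ` on `𝒞`, twice differentiable on `int 𝒞`
    (hconv : StrictConvexOn ℝ 𝒞 ψ)
    (hderiv : ∀ t ∈ 𝒞, HasDerivWithinAt ψ (dψ t) 𝒞 t)
    (hderiv2 : ∀ t ∈ interior 𝒞, DifferentiableAt ℝ dψ t)
    -- coercivity of `t ↦ ψ'(t)t - ψ(t)`
    (hcoer : ∀ c : ℝ, ∃ R : ℝ, ∀ t ∈ 𝒞, R ≤ |t| → c ≤ dψ t * t - ψ t)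
    -- `ψ'` odd when `𝒞 = ℝ`, `ψ'(0) ≥ 0` when `𝒞 = ℝ_{≥0}`
    (hodd : 𝒞 = Set.univ → ∀ t, dψ (-t) = -dψ t)
    (hnn : 𝒞 = Set.Ici 0 → 0 ≤ dψ 0)
    (x z : ℝ) (hx : x ∈ 𝒞) (hz : z ∈ subdiffH 𝒞 dψ α x)
    (hzbig : |z| > (dψ α - dψ 0) / CK + dψ 0) :
    ∀ x' ∈ 𝒞, x' ≠ x → ∀ z' ∈ subdiffH 𝒞 dψ α x',
      (1 - CK) * ((dψ x - dψ x') * (x - x')) < (z - z') * (x - x') := by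
  have hmono : ∀ s ∈ 𝒞, ∀ t ∈ 𝒞, s < t → dψ s < dψ t := by
    intro s hs t ht hst
    have hsub : Set.Icc s t ⊆ 𝒞 := hconv.1.ordConnected.out hs ht
    have hc := hconv.subset hsub (convex_Icc s t)
    have hs' : s ∈ Set.Icc s t := ⟨le_refl _, hst.le⟩
    have ht' : t ∈ Set.Icc s t := ⟨hst.le, le_refl _⟩
    have h1 : HasDerivWithinAt ψ (dψ s) (Set.Ioi s) s :=
      (((hderiv s hs).mono hsub).mono_of_mem_nhdsWithin (Icc_mem_nhdsGT hst))
    have h2 : HasDerivWithinAt ψ (dψ t) (Set.Iio t) t :=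
      (((hderiv t ht).mono hsub).mono_of_mem_nhdsWithin (Icc_mem_nhdsLT hst))
    exact (hc.lt_slope_of_hasDerivWithinAt_Ioi hs' ht' hst h1).trans
      (hc.slope_lt_of_hasDerivWithinAt_Iio hs' ht' hst h2)
  have hle : ∀ s ∈ 𝒞, ∀ t ∈ 𝒞, s ≤ t → dψ s ≤ dψ t := by
    intro s hs t ht hst
    rcases hst.eq_or_lt with h | h
    · rw [h]
    · exact (hmono s hs t ht h).le
  intro x' hx' hne z' hz'
  -- generic strict case
  have hgen : (1 - CK) * ((dψ x - dψ x') * (x - x')) < (dψ x - dψ x') * (x - x') := by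
    have hp : 0 < (dψ x - dψ x') * (x - x') := by
      rcases lt_or_gt_of_ne hne with h | h
      · exact mul_pos (sub_pos.2 (hmono _ hx' _ hx h)) (sub_pos.2 h)
      · exact mul_pos_of_neg_of_neg (sub_neg.2 (hmono _ hx _ hx' h)) (sub_neg.2 h)
    nlinarith
  have hR : x' < x → (1 - CK) * (dψ x - dψ x') < z - z' →
      (1 - CK) * ((dψ x - dψ x') * (x - x')) < (z - z') * (x - x') := by
    intro h h1
    have := mul_lt_mul_of_pos_right h1 (sub_pos.2 h)
    linarith
  have hL : x < x' → z - z' < (1 - CK) * (dψ x - dψ x') →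
      (1 - CK) * ((dψ x - dψ x') * (x - x')) < (z - z') * (x - x') := by
    intro h h1
    have := mul_lt_mul_of_neg_right h1 (sub_neg.2 h)
    linarith
  rcases h𝒞 with h𝒞 | h𝒞
  · have ho := hodd h𝒞
    have hm : ∀ s t, s < t → dψ s < dψ t := fun s t h =>
      hmono s (by simp [h𝒞]) t (by simp [h𝒞]) h
    have hl : ∀ s t, s ≤ t → dψ s ≤ dψ t := fun s t h =>
      hle s (by simp [h𝒞]) t (by simp [h𝒞]) h
    have h0 : dψ 0 = 0 := by have := ho 0; simp at this; linarith
    have hA : 0 < dψ α := by have := hm 0 α hα; linarith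
    rw [h0] at hzbig
    simp only [sub_zero, add_zero] at hzbig
    have hb : dψ α < CK * |z| := by
      rw [gt_iff_lt, div_lt_iff₀ hCK0] at hzbig; linarith
    have hb2 : dψ α < |z| := by nlinarith [abs_nonneg z]
    have hx1 : α < |x| ∧ z = dψ x := by
      unfold subdiffH at hz
      rw [if_pos h𝒞] at hz
      split_ifs at hz with c1 c2
      · exact absurd (abs_le.2 hz) (not_le.2 hb2)
      · exfalso
        rw [Set.mem_singleton_iff] at hz
        rcases lt_or_gt_of_ne c1 with c | c
        · rw [Real.sign_of_neg c] at hz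
          rw [hz, neg_one_mul, abs_neg, abs_of_pos hA] at hb2
          exact lt_irrefl _ hb2
        · rw [Real.sign_of_pos c] at hz
          rw [hz, one_mul, abs_of_pos hA] at hb2
          exact lt_irrefl _ hb2
      · exact ⟨not_le.1 c2, hz⟩
    obtain ⟨hxa, rfl⟩ := hx1
    have hx2 : α < |x'| ∧ z' = dψ x' ∨ (-α ≤ x' ∧ x' ≤ α) ∧
        ((x' = 0 ∧ -dψ α ≤ z' ∧ z' ≤ dψ α) ∨ (0 < x' ∧ z' = dψ α) ∨ (x' < 0 ∧ z' = -dψ α)) := by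
      unfold subdiffH at hz'
      rw [if_pos h𝒞] at hz'
      split_ifs at hz' with c1 c2
      · right
        exact ⟨by constructor <;> linarith, Or.inl ⟨c1, hz'.1, hz'.2⟩⟩
      · right
        refine ⟨abs_le.1 c2, Or.inr ?_⟩
        rw [Set.mem_singleton_iff] at hz'
        rcases lt_or_gt_of_ne c1 with c | c
        · right
          rw [Real.sign_of_neg c] at hz'
          exact ⟨c, by linarith⟩
        · left
          rw [Real.sign_of_pos c] at hz'
          exact ⟨c, by linarith⟩
      · exact Or.inl ⟨not_le.1 c2, hz'⟩
    rcases hx2 with ⟨_, rfl⟩ | ⟨⟨hl1, hl2⟩, hx2⟩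
    · exact hgen
    have e1 := hl _ _ hl1
    have e2 := hl _ _ hl2
    rw [ho] at e1
    rcases lt_abs.1 hxa with c | c
    · apply hR (by linarith)
      have p := hm _ _ c
      rw [abs_of_pos (by linarith)] at hb
      rcases hx2 with ⟨rfl, q1, q2⟩ | ⟨q, rfl⟩ | ⟨q, rfl⟩
      · rw [h0]; linarith
      · have := hm _ _ q
        nlinarith
      · have := hm _ _ q
        nlinarith
    · apply hL (by linarith)
      have p := hm _ _ c
      rw [ho] at p
      rw [abs_of_neg (by linarith)] at hb
      rcases hx2 with ⟨rfl, q1, q2⟩ | ⟨q, rfl⟩ | ⟨q, rfl⟩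
      · rw [h0]; linarith
      · have := hm _ _ q
        nlinarith
      · have := hm _ _ q
        nlinarith
  · have hne' : 𝒞 ≠ Set.univ := by
      rw [h𝒞]
      intro h
      have : (-1 : ℝ) ∈ Set.Ici (0 : ℝ) := h ▸ Set.mem_univ _
      rw [Set.mem_Ici] at this
      linarith
    have hn := hnn h𝒞
    have m0 : (0 : ℝ) ∈ 𝒞 := by simp [h𝒞]
    have mα : α ∈ 𝒞 := by simp [h𝒞, hα.le]
    have hA := hmono 0 m0 α mα hα
    have hb : dψ α - dψ 0 < CK * (|z| - dψ 0) := by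
      have : (dψ α - dψ 0) / CK < |z| - dψ 0 := by linarith
      rw [div_lt_iff₀ hCK0] at this; linarith
    unfold subdiffH at hz hz'
    rw [if_neg hne'] at hz hz'
    split_ifs at hz with c1
    · exfalso
      rw [Set.mem_singleton_iff] at hz
      rw [hz, abs_of_pos (by linarith)] at hb
      nlinarith
    · rw [Set.mem_singleton_iff] at hz
      subst hz
      have c := not_le.1 c1
      have p := hmono _ mα _ hx c
      rw [abs_of_pos (by linarith)] at hb
      split_ifs at hz' with c2
      · rw [Set.mem_singleton_iff] at hz'
        subst hz'
        apply hR (by linarith)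
        have q := hle _ m0 _ hx' (by rw [h𝒞] at hx'; exact hx')
        nlinarith
      · rw [Set.mem_singleton_iff] at hz'
        subst hz'
        exact hgen
end
end

section
/- Assume F := G_y(A·) satisfies the BRSC property with respect to Ψ, a set X ⊆ C^N, and K, with constant C_K > 0. Let x ∈ X be a critical point of J_Ψ such that for every i = 1,…,N, |z_i(x)| does not belong to the interval [C_K(ψ_i'(α_i) − ψ_i'(0)) + ψ_i'(0), (ψ_i'(α_i) − ψ_i'(0))/C_K + ψ_i'(0)]. Then every critical point x' ∈ C^N of J_Ψ with x' ≠ x satisfies ‖x' − x‖₀ > K. -/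
open Classical

noncomputable section

/-- one-dimensional Bregman divergence `d_ψ(x, x') = ψ(x) - ψ(x') - ψ'(x')(x - x')`,
with the derivative `dψ` of `ψ` given as data. -/
def dBreg (ψ dψ : ℝ → ℝ) (x x' : ℝ) : ℝ := ψ x - ψ x' - dψ x' * (x - x')

/-- The data-fidelity setting of the paper (Assumption 1.3): a separable fidelity term
`G_y(w) = Σ_j g_j(w_j)` where each `g j` is nonnegative, strictly convex, twice
differentiable on the interior of its domain, with an `L`-Lipschitz derivative `dg j`;
a matrix `A`; and the constraint set `𝒞` equal to `ℝ` or `ℝ_{≥0}`. -/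
structure FidSetting (M N : ℕ) where
  𝒞 : Set ℝ
  h𝒞 : 𝒞 = Set.univ ∨ 𝒞 = Set.Ici 0
  A : Matrix (Fin M) (Fin N) ℝ
  domg : Fin M → Set ℝ
  g : Fin M → ℝ → ℝ
  dg : Fin M → ℝ → ℝ
  L : ℝ
  hL : 0 < L
  hdom : ∀ x : Fin N → ℝ, (∀ i, x i ∈ 𝒞) → ∀ j, (A.mulVec x) j ∈ interior (domg j)
  hg_nonneg : ∀ j, ∀ w ∈ domg j, 0 ≤ g j w
  hg_sconv : ∀ j, StrictConvexOn ℝ (domg j) (g j)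
  hg_deriv : ∀ j, ∀ w ∈ interior (domg j), HasDerivAt (g j) (dg j w) w
  hg_deriv2 : ∀ j, ∀ w ∈ interior (domg j), DifferentiableAt ℝ (dg j) w
  hg_lip : ∀ j, ∀ w ∈ domg j, ∀ v ∈ domg j, |dg j w - dg j v| ≤ L * |w - v|

/-- the feasible set `𝒞^N`. -/
def FidSetting.feas {M N : ℕ} (S : FidSetting M N) : Set (Fin N → ℝ) :=
  {x | ∀ i, x i ∈ S.𝒞}

/-- the data term `F(x) = G_y(Ax)`. -/
def FidSetting.F {M N : ℕ} (S : FidSetting M N) (x : Fin N → ℝ) : ℝ :=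
  ∑ j, S.g j (S.A.mulVec x j)

/-- the gradient `∇F(x) = Aᵀ ∇G_y(Ax)`. -/
def FidSetting.gradF {M N : ℕ} (S : FidSetting M N) (x : Fin N → ℝ) : Fin N → ℝ :=
  fun i => ∑ j, S.A j i * S.dg j (S.A.mulVec x j)

/-- the Bregman-generating setting (Definition 3.1 of the paper): `Ψ(x) = Σ_i ψ_i(x_i)`
with each `ψ_i` strictly convex, twice differentiable, `t ↦ ψ_i'(t)t - ψ_i(t)` coercive,
and `ψ_i'` odd when `𝒞 = ℝ` (resp. `ψ_i'(0) ≥ 0` when `𝒞 = ℝ_{≥0}`). -/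
structure PsiSetting (N : ℕ) (𝒞 : Set ℝ) where
  ψ : Fin N → ℝ → ℝ
  dψ : Fin N → ℝ → ℝ
  hconv : ∀ i, StrictConvexOn ℝ 𝒞 (ψ i)
  hderiv : ∀ i, ∀ t ∈ 𝒞, HasDerivWithinAt (ψ i) (dψ i t) 𝒞 t
  hderiv2 : ∀ i, ∀ t ∈ interior 𝒞, DifferentiableAt ℝ (dψ i) t
  hcoer : ∀ i, ∀ c : ℝ, ∃ R : ℝ, ∀ t ∈ 𝒞, R ≤ |t| → c ≤ dψ i t * t - ψ i t
  hodd : 𝒞 = Set.univ → ∀ i t, dψ i (-t) = -(dψ i t)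
  hnn : 𝒞 = Set.Ici 0 → ∀ i, 0 ≤ dψ i 0

/-- `∇Ψ(x)`. -/
def PsiSetting.gradPsi {N : ℕ} {𝒞 : Set ℝ} (P : PsiSetting N 𝒞) (x : Fin N → ℝ) :
    Fin N → ℝ :=
  fun i => P.dψ i (x i)

/-- the scalar B-rex penalty `β_{ψ_i}`. -/
def betaPen {N : ℕ} {𝒞 : Set ℝ} (P : PsiSetting N 𝒞) (α : Fin N → ℝ) (lam0 : ℝ)
    (i : Fin N) (t : ℝ) : ℝ :=
  if |t| ≤ α i then P.ψ i 0 - P.ψ i t + Real.sign t * P.dψ i (α i) * t else lam0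

/-- the relaxed objective `J_Ψ(x) = G_y(Ax) + B_Ψ(x)`. -/
def JPsi {M N : ℕ} (S : FidSetting M N) (P : PsiSetting N S.𝒞) (α : Fin N → ℝ) (lam0 : ℝ)
    (x : Fin N → ℝ) : ℝ :=
  S.F x + ∑ i, betaPen P α lam0 i (x i)

/-- the `ℓ₀`-regularized objective `J₀(x) = G_y(Ax) + λ₀‖x‖₀`. -/
def J0 {M N : ℕ} (S : FidSetting M N) (lam0 : ℝ) (x : Fin N → ℝ) : ℝ :=
  S.F x + lam0 * (norm0 x : ℝ)

/-- `z(x) = ∇Ψ(x) - Aᵀ∇G_y(Ax)`. -/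
def zmap {M N : ℕ} (S : FidSetting M N) (P : PsiSetting N S.𝒞) (x : Fin N → ℝ) :
    Fin N → ℝ :=
  fun i => P.dψ i (x i) - S.gradF x i

/-- `x ∈ 𝒞^N` is a critical point of `J_Ψ` iff `z_i(x) ∈ ∂h_i(x_i)` for every `i`. -/
def IsCritical {M N : ℕ} (S : FidSetting M N) (P : PsiSetting N S.𝒞) (α : Fin N → ℝ)
    (x : Fin N → ℝ) : Prop :=
  x ∈ S.feas ∧ ∀ i, zmap S P x i ∈ subdiffH S.𝒞 (P.dψ i) (α i) (x i)

/-- `F = G_y(A·)` satisfies BRSC with respect to `Ψ`, `X`, `K`, with constant `CK`. -/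
def BRSCholds {M N : ℕ} (S : FidSetting M N) (P : PsiSetting N S.𝒞)
    (X : Set (Fin N → ℝ)) (K : ℕ) (CK : ℝ) : Prop :=
  ∀ x ∈ X, ∀ x' ∈ S.feas, x ≠ x' → norm0 (x - x') ≤ K →
    CK * dotp (P.gradPsi x - P.gradPsi x') (x - x')
      ≤ dotp (S.gradF x - S.gradF x') (x - x')

open Classical in
lemma aux_smono {D : Set ℝ} {f d : ℝ → ℝ} (hc : StrictConvexOn ℝ D f)
    (hd : ∀ t ∈ D, HasDerivWithinAt f (d t) D t) {x y : ℝ} (hx : x ∈ D) (hy : y ∈ D)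
    (hxy : x < y) : d x < d y :=
  (hc.lt_slope_of_hasDerivWithinAt hx hy hxy (hd x hx)).trans
    (hc.slope_lt_of_hasDerivWithinAt hx hy hxy (hd y hy))

def Reg (f : ℝ → ℝ) (α t z : ℝ) : Prop :=
  (t = 0 ∧ f t = 0 ∧ -(f α) ≤ z ∧ z ≤ f α) ∨ (0 < t ∧ 0 < f t ∧ f t ≤ f α ∧ z = f α) ∨
  (0 < t ∧ f α < f t ∧ z = f t) ∨ (t < 0 ∧ f t < 0 ∧ -(f α) ≤ f t ∧ z = -(f α)) ∨
  (t < 0 ∧ f t < -(f α) ∧ z = f t)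

lemma reg_of_mem {f : ℝ → ℝ} (hm : StrictMono f) (ho : ∀ t, f (-t) = -(f t)) {α t z : ℝ}
    (hα : 0 < α) (h : z ∈ subdiffH Set.univ f α t) : Reg f α t z := by
  have h0 : f 0 = 0 := by have := ho 0; simp at this; linarith
  unfold Reg
  simp only [subdiffH, if_true] at h
  split_ifs at h with h1 h2
  · left; subst h1; exact ⟨rfl, h0, h.1, h.2⟩
  · rcases lt_or_gt_of_ne h1 with h3 | h3
    · rw [Real.sign_of_neg h3] at h
      rw [abs_of_neg h3] at h2
      have e1 := hm h3
      have e2 := hm.monotone h2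
      rw [ho] at e2
      simp at h
      right; right; right; left
      exact ⟨h3, by linarith, by linarith, h⟩
    · rw [Real.sign_of_pos h3] at h
      rw [abs_of_pos h3] at h2
      have e1 := hm h3
      have e2 := hm.monotone h2
      simp at h
      right; left
      exact ⟨h3, by linarith, by linarith, h⟩
  · rcases lt_or_gt_of_ne h1 with h3 | h3
    · rw [abs_of_neg h3] at h2
      have e2 := hm (not_le.1 h2)
      rw [ho] at e2
      right; right; right; right
      exact ⟨h3, by linarith, h⟩
    · rw [abs_of_pos h3] at h2
      have e2 := hm (not_le.1 h2)
      right; right; left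
      exact ⟨h3, by linarith, h⟩

lemma reg_neg {f : ℝ → ℝ} (ho : ∀ t, f (-t) = -(f t)) {α t z : ℝ}
    (h : Reg f α t z) : Reg f α (-t) (-z) := by
  unfold Reg at *
  rw [ho]
  rcases h with ⟨a, b, c, d⟩ | ⟨a, b, c, d⟩ | ⟨a, b, c⟩ | ⟨a, b, c, d⟩ | ⟨a, b, c⟩
  · left; refine ⟨?_, ?_, ?_, ?_⟩ <;> linarith
  · right; right; right; left; refine ⟨?_, ?_, ?_, ?_⟩ <;> linarith
  · right; right; right; right; refine ⟨?_, ?_, ?_⟩ <;> linarith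
  · right; left; refine ⟨?_, ?_, ?_, ?_⟩ <;> linarith
  · right; right; left; refine ⟨?_, ?_, ?_⟩ <;> linarith

lemma key_real {f : ℝ → ℝ} (hm : StrictMono f) {α C x x' z z' : ℝ} (hC : 0 < C)
    (hp : 0 < f α)
    (h : Reg f α x z) (h' : Reg f α x' z') (hz : |z| ∉ Set.Icc (C * f α) (f α / C))
    (hlt : x' < x) : (1 - C) * (f x - f x') < z - z' := by
  have hff := hm hlt
  unfold Reg at *
  generalize f x = a at *
  generalize f x' = a' at *
  generalize f α = p at *
  rcases lt_or_ge 1 C with h1 | h1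
  · have : (1 - C) * (a - a') < 0 := mul_neg_of_neg_of_pos (by linarith) (by linarith)
    have : z' ≤ z := by
      rcases h with ⟨_, _, _, _⟩ | ⟨_, _, _, _⟩ | ⟨_, _, _⟩ | ⟨_, _, _, _⟩ | ⟨_, _, _⟩ <;>
      rcases h' with ⟨_, _, _, _⟩ | ⟨_, _, _, _⟩ | ⟨_, _, _⟩ | ⟨_, _, _, _⟩ | ⟨_, _, _⟩ <;>
      linarith
    linarith
  · have hz2 : |z| < C * p ∨ p < C * |z| := by
      by_contra hcon
      push Not at hcon
      exact hz ⟨hcon.1, by rw [le_div_iff₀ hC]; linarith [hcon.2]⟩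
    have hCp : C * p ≤ p := by nlinarith
    have hcz : C * |z| ≤ |z| := by nlinarith [abs_nonneg z]
    rcases hz2 with hz2 | hz2
    · have ⟨hl, hr⟩ := abs_lt.1 hz2
      rcases h with ⟨_, _, _, _⟩ | ⟨_, _, _, _⟩ | ⟨_, _, _⟩ | ⟨_, _, _, _⟩ | ⟨_, _, _⟩ <;>
      rcases h' with ⟨_, _, _, _⟩ | ⟨_, _, _, _⟩ | ⟨_, _, _⟩ | ⟨_, _, _, _⟩ | ⟨_, _, _⟩ <;>
      first
      | (exfalso; linarith)
      | (subst_vars; nlinarith)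
    · rcases lt_or_ge z 0 with h0 | h0
      · rw [abs_of_neg h0] at *
        rcases h with ⟨_, _, _, _⟩ | ⟨_, _, _, _⟩ | ⟨_, _, _⟩ | ⟨_, _, _, _⟩ | ⟨_, _, _⟩ <;>
        rcases h' with ⟨_, _, _, _⟩ | ⟨_, _, _, _⟩ | ⟨_, _, _⟩ | ⟨_, _, _, _⟩ | ⟨_, _, _⟩ <;>
        first
        | (exfalso; linarith)
        | (subst_vars; nlinarith)
      · rw [abs_of_nonneg h0] at *
        rcases h with ⟨_, _, _, _⟩ | ⟨_, _, _, _⟩ | ⟨_, _, _⟩ | ⟨_, _, _, _⟩ | ⟨_, _, _⟩ <;>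
        rcases h' with ⟨_, _, _, _⟩ | ⟨_, _, _, _⟩ | ⟨_, _, _⟩ | ⟨_, _, _, _⟩ | ⟨_, _, _⟩ <;>
        first
        | (exfalso; linarith)
        | (subst_vars; nlinarith)

lemma ici_ne : Set.Ici (0:ℝ) ≠ Set.univ := by
  intro h
  have : (-1:ℝ) ∈ Set.Ici (0:ℝ) := by rw [h]; trivial
  simp at this
  linarith

lemma key_nn {f : ℝ → ℝ} (hm : ∀ x y : ℝ, 0 ≤ x → 0 ≤ y → x < y → f x < f y)
    {α C x x' z z' : ℝ} (hC : 0 < C) (hα : 0 < α) (h0 : 0 ≤ f 0)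
    (hx : 0 ≤ x) (hx' : 0 ≤ x') (hne : x ≠ x')
    (h : z ∈ subdiffH (Set.Ici 0) f α x) (h' : z' ∈ subdiffH (Set.Ici 0) f α x')
    (hz : |z| ∉ Set.Icc (C * (f α - f 0) + f 0) ((f α - f 0) / C + f 0)) :
    (1 - C) * (f x - f x') * (x - x') < (z - z') * (x - x') := by
  have hp := hm 0 α le_rfl hα.le hα
  have hmm : ∀ x y : ℝ, 0 ≤ x → 0 ≤ y → x ≤ y → f x ≤ f y := by
    intro x y h1 h2 h3
    rcases h3.eq_or_lt with h4 | h4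
    · rw [h4]
    · exact (hm x y h1 h2 h4).le
  simp only [subdiffH, if_neg ici_ne] at h h'
  have a0 := hmm 0 x le_rfl hx hx
  have a0' := hmm 0 x' le_rfl hx' hx'
  have hR : (x ≤ α ∧ f x ≤ f α ∧ z = f α) ∨ (α < x ∧ f α < f x ∧ z = f x) := by
    split_ifs at h with h1
    · exact Or.inl ⟨h1, hmm _ _ hx hα.le h1, h⟩
    · exact Or.inr ⟨not_le.1 h1, hm _ _ hα.le hx (not_le.1 h1), h⟩
  have hR' : (x' ≤ α ∧ f x' ≤ f α ∧ z' = f α) ∨ (α < x' ∧ f α < f x' ∧ z' = f x') := by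
    split_ifs at h' with h1
    · exact Or.inl ⟨h1, hmm _ _ hx' hα.le h1, h'⟩
    · exact Or.inr ⟨not_le.1 h1, hm _ _ hα.le hx' (not_le.1 h1), h'⟩
  have hzp : 0 ≤ z := by rcases hR with h | h <;> linarith [h.2.2]
  rw [abs_of_nonneg hzp] at hz
  have hmono : x < x' → f x < f x' := hm _ _ hx hx'
  have hmono' : x' < x → f x' < f x := hm _ _ hx' hx
  clear hm hmm h h'
  generalize f x = a at *
  generalize f x' = a' at *
  generalize f α = p at *
  generalize f 0 = b at *
  rcases lt_or_ge 1 C with h1 | h1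
  · rcases lt_or_gt_of_ne hne with hlt | hlt
    · have := hmono hlt
      apply mul_lt_mul_of_neg_right _ (sub_neg.2 hlt)
      have : 0 < (1 - C) * (a - a') := mul_pos_of_neg_of_neg (by linarith) (by linarith)
      rcases hR with ⟨_, _, _⟩ | ⟨_, _, _⟩ <;> rcases hR' with ⟨_, _, _⟩ | ⟨_, _, _⟩ <;> linarith
    · have := hmono' hlt
      apply mul_lt_mul_of_pos_right _ (sub_pos.2 hlt)
      have : (1 - C) * (a - a') < 0 := mul_neg_of_neg_of_pos (by linarith) (by linarith)
      rcases hR with ⟨_, _, _⟩ | ⟨_, _, _⟩ <;> rcases hR' with ⟨_, _, _⟩ | ⟨_, _, _⟩ <;> linarith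
  · have hz2 : z < C * (p - b) + b ∨ p - b < C * (z - b) := by
      by_contra hcon
      push Not at hcon
      refine hz ⟨hcon.1, ?_⟩
      have : z - b ≤ (p - b) / C := by rw [le_div_iff₀ hC]; linarith [hcon.2]
      linarith
    have hCp : C * (p - b) ≤ p - b := by nlinarith
    rcases hR with ⟨_, _, rfl⟩ | ⟨_, _, rfl⟩
    · exfalso; rcases hz2 with h | h <;> linarith
    · have hz3 : p - b < C * (z - b) := by
        rcases hz2 with h | h <;> linarith
      rcases hR' with ⟨_, _, rfl⟩ | ⟨_, _, rfl⟩
      · have hlt : x' < x := by linarith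
        apply mul_lt_mul_of_pos_right _ (sub_pos.2 hlt)
        nlinarith
      · rcases lt_or_gt_of_ne hne with hlt | hlt
        · apply mul_lt_mul_of_neg_right _ (sub_neg.2 hlt)
          nlinarith [hmono hlt]
        · apply mul_lt_mul_of_pos_right _ (sub_pos.2 hlt)
          nlinarith [hmono' hlt]

/-- Theorem 4.1 of the paper: a critical point whose `z` avoids the
critical interval is isolated in terms of sparsity. -/
theorem stmt8 {M N : ℕ} (S : FidSetting M N) (P : PsiSetting N S.𝒞)
    (lam0 : ℝ) (hlam0 : 0 < lam0) (α : Fin N → ℝ)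
    (hα : ∀ i, 0 < α i ∧ dBreg (P.ψ i) (P.dψ i) 0 (α i) = lam0)
    (X : Set (Fin N → ℝ)) (hXfeas : X ⊆ S.feas) (K : ℕ) (CK : ℝ) (hCK : 0 < CK)
    (hBRSC : BRSCholds S P X K CK)
    (x : Fin N → ℝ) (hxX : x ∈ X) (hxcrit : IsCritical S P α x)
    (hz : ∀ i, |zmap S P x i| ∉
      Set.Icc (CK * (P.dψ i (α i) - P.dψ i 0) + P.dψ i 0)
              ((P.dψ i (α i) - P.dψ i 0) / CK + P.dψ i 0)) :
    ∀ x' : Fin N → ℝ, IsCritical S P α x' → x' ≠ x → K < norm0 (x' - x) := by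
  intro x' hx' hne
  by_contra hK
  push Not at hK
  have hn : norm0 (x - x') ≤ K := by
    have : norm0 (x - x') = norm0 (x' - x) := by
      unfold norm0
      congr 1
      ext i
      simp [sub_eq_zero, eq_comm]
    omega
  have hB := hBRSC x hxX x' hx'.1 hne.symm hn
  have key : ∀ i, x i ≠ x' i →
      (1 - CK) * (P.dψ i (x i) - P.dψ i (x' i)) * (x i - x' i) <
        (zmap S P x i - zmap S P x' i) * (x i - x' i) := by
    intro i hi
    have h1 := hxcrit.2 i
    have h2 := hx'.2 i
    have hzi := hz i
    have f1 := hxcrit.1 i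
    have f2 := hx'.1 i
    have hsm : ∀ s t : ℝ, s ∈ S.𝒞 → t ∈ S.𝒞 → s < t → P.dψ i s < P.dψ i t :=
      fun s t hs ht hst => aux_smono (P.hconv i) (P.hderiv i) hs ht hst
    generalize zmap S P x i = z at *
    generalize zmap S P x' i = z' at *
    have hodd := fun hU => P.hodd hU i
    have hnn := fun hU => P.hnn hU i
    have hαi := (hα i).1
    generalize P.dψ i = d at *
    rcases S.h𝒞 with hU | hU
    · have ho := hodd hU
      rw [hU] at h1 h2 hsm
      have hm : StrictMono d := fun s t hst => hsm s t trivial trivial hst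
      have h0 : d 0 = 0 := by have := ho 0; simp at this; linarith
      have hp : 0 < d (α i) := by have := hm hαi; linarith
      have r1 := reg_of_mem hm ho hαi h1
      have r2 := reg_of_mem hm ho hαi h2
      simp only [h0, sub_zero, add_zero] at hzi
      rcases lt_or_gt_of_ne hi with hlt | hlt
      · have := key_real hm hCK hp (reg_neg ho r1) (reg_neg ho r2)
          (by rwa [abs_neg]) (neg_lt_neg hlt)
        rw [ho, ho] at this
        apply mul_lt_mul_of_neg_right _ (sub_neg.2 hlt)
        linarith
      · exact mul_lt_mul_of_pos_right (key_real hm hCK hp r1 r2 hzi hlt) (sub_pos.2 hlt)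
    · rw [hU] at h1 h2 hsm f1 f2
      exact key_nn hsm hCK hαi (hnn hU) f1 f2 hi h1 h2 hzi
  obtain ⟨k, hk⟩ : ∃ k, x k ≠ x' k := by
    by_contra hcon
    push Not at hcon
    exact hne (funext fun i => (hcon i).symm)
  have hsum : ∑ i, (1 - CK) * (P.dψ i (x i) - P.dψ i (x' i)) * (x i - x' i) <
      ∑ i, (zmap S P x i - zmap S P x' i) * (x i - x' i) := by
    apply Finset.sum_lt_sum
    · intro i _
      by_cases hi : x i = x' i
      · simp [hi]
      · exact (key i hi).le
    · exact ⟨k, Finset.mem_univ k, key k hk⟩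
  have e : ∑ i, (zmap S P x i - zmap S P x' i) * (x i - x' i) -
      ∑ i, (1 - CK) * (P.dψ i (x i) - P.dψ i (x' i)) * (x i - x' i) =
      CK * dotp (P.gradPsi x - P.gradPsi x') (x - x') -
      dotp (S.gradF x - S.gradF x') (x - x') := by
    unfold dotp
    rw [Finset.mul_sum, ← Finset.sum_sub_distrib, ← Finset.sum_sub_distrib]
    apply Finset.sum_congr rfl
    intro i _
    simp only [zmap, PsiSetting.gradPsi, Pi.sub_apply]
    ring
  linarith
end
end

section
/- Assume F := G_y(A·) satisfies the BRSC property with respect to Ψ, a set X ⊆ C^N, and K, with constant C_K > 1. Then J_Ψ admits at most one critical point x ∈ X with ‖x‖₀ ≤ K/2: if x and x̃ are critical points of J_Ψ lying in X with 2‖x‖₀ ≤ K and 2‖x̃‖₀ ≤ K, then x = x̃. -/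
open Classical

noncomputable section

lemma aux_strictMono {N : ℕ} {𝒞 : Set ℝ} (P : PsiSetting N 𝒞) (i : Fin N) :
    StrictMonoOn (P.dψ i) 𝒞 := by
  intro x hx y hy hxy
  have h1 := (P.hconv i).lt_slope_of_hasDerivWithinAt hx hy hxy (P.hderiv i x hx)
  have h2 := (P.hconv i).slope_lt_of_hasDerivWithinAt hx hy hxy (P.hderiv i y hy)
  exact h1.trans h2

lemma aux_mono {𝒞 : Set ℝ} (h𝒞 : 𝒞 = Set.univ ∨ 𝒞 = Set.Ici 0) (d : ℝ → ℝ)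
    (hm : StrictMonoOn d 𝒞) (hodd : 𝒞 = Set.univ → ∀ t, d (-t) = - d t)
    (a : ℝ) (ha : 0 < a) (s t u v : ℝ) (hs : s ∈ 𝒞) (ht : t ∈ 𝒞) (hst : s < t)
    (hu : u ∈ subdiffH 𝒞 d a s) (hv : v ∈ subdiffH 𝒞 d a t) : u ≤ v := by
  rcases h𝒞 with h | h
  · replace hodd := hodd h
    subst h
    have hm' : StrictMono d := strictMonoOn_univ.mp hm
    have h0 : d 0 = 0 := by have := hodd 0; simp at this; linarith
    have hda : 0 < d a := by have := hm' ha; linarith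
    have key1 : ∀ r w, w ∈ subdiffH Set.univ d a r → 0 < r → w = max (d a) (d r) := by
      intro r w hw hr
      simp only [subdiffH, if_true, if_neg hr.ne', abs_of_pos hr, Real.sign_of_pos hr] at hw
      split_ifs at hw with h1
      · rw [max_eq_left (hm'.monotone h1)]; simpa using hw
      · rw [max_eq_right (hm'.monotone (not_le.mp h1).le)]; simpa using hw
    have key2 : ∀ r w, w ∈ subdiffH Set.univ d a r → r < 0 → w = - max (d a) (- d r) := by
      intro r w hw hr
      simp only [subdiffH, if_true, if_neg hr.ne, abs_of_neg hr, Real.sign_of_neg hr] at hw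
      rw [← hodd]
      split_ifs at hw with h1
      · rw [max_eq_left (hm'.monotone h1)]; simpa using hw
      · rw [max_eq_right (hm'.monotone (not_le.mp h1).le), hodd]; simpa using hw
    have key3 : ∀ w, w ∈ subdiffH Set.univ d a 0 → - d a ≤ w ∧ w ≤ d a := by
      intro w hw
      simpa [subdiffH] using hw
    have hd := hm' hst
    rcases lt_trichotomy s 0 with h1 | h1 | h1 <;> rcases lt_trichotomy t 0 with h2 | h2 | h2
    · rw [key2 s u hu h1, key2 t v hv h2]
      exact neg_le_neg (max_le_max le_rfl (by linarith))
    · subst h2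
      rw [key2 s u hu h1]
      linarith [(key3 v hv).1, le_max_left (d a) (- d s)]
    · rw [key2 s u hu h1, key1 t v hv h2]
      linarith [le_max_left (d a) (- d s), le_max_left (d a) (d t)]
    · linarith
    · linarith
    · subst h1
      rw [key1 t v hv h2]
      linarith [(key3 u hu).2, le_max_left (d a) (d t)]
    · linarith
    · linarith
    · rw [key1 s u hu h1, key1 t v hv h2]
      exact max_le_max le_rfl hd.le
  · have hne : 𝒞 ≠ Set.univ := by
      rw [h]; intro h'
      have : (-1 : ℝ) ∈ Set.Ici (0 : ℝ) := h' ▸ Set.mem_univ _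
      norm_num at this
    have haC : a ∈ 𝒞 := by rw [h]; exact ha.le
    have hd := hm hs ht hst
    simp only [subdiffH, if_neg hne] at hu hv
    split_ifs at hu hv with h1 h2 h2 <;> simp only [Set.mem_singleton_iff] at hu hv <;>
      subst hu <;> subst hv
    · exact le_rfl
    · exact (hm haC ht (not_le.mp h2)).le
    · linarith
    · exact hd.le

lemma aux_norm0 {ι : Type*} [Fintype ι] (x y : ι → ℝ) :
    norm0 (x - y) ≤ norm0 x + norm0 y := by
  unfold norm0
  refine le_trans (Finset.card_le_card ?_) (Finset.card_union_le _ _)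
  intro i hi
  simp only [Finset.mem_filter, Finset.mem_univ, true_and, Finset.mem_union, Pi.sub_apply] at hi ⊢
  by_contra hc
  push Not at hc
  exact hi (by rw [hc.1, hc.2, sub_zero])

/-- Corollary 4.2: if `C_K > 1` then `J_Ψ` admits at most one critical
point in `X` of sparsity at most `K/2`. -/
theorem stmt9 {M N : ℕ} (S : FidSetting M N) (P : PsiSetting N S.𝒞)
    (lam0 : ℝ) (hlam0 : 0 < lam0) (α : Fin N → ℝ)
    (hα : ∀ i, 0 < α i ∧ dBreg (P.ψ i) (P.dψ i) 0 (α i) = lam0)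
    (X : Set (Fin N → ℝ)) (hXfeas : X ⊆ S.feas) (K : ℕ) (CK : ℝ) (hCK : 1 < CK)
    (hBRSC : BRSCholds S P X K CK) :
    ∀ x ∈ X, ∀ xt ∈ X, IsCritical S P α x → IsCritical S P α xt →
      2 * norm0 x ≤ K → 2 * norm0 xt ≤ K → x = xt := by
  intro x hx xt hxt hcx hcxt hK hKt
  by_contra hne
  have hB := hBRSC x hx xt (hXfeas hxt) hne (le_trans (aux_norm0 x xt) (by omega))
  have hpos : 0 < dotp (P.gradPsi x - P.gradPsi xt) (x - xt) := by
    unfold dotp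
    obtain ⟨k, hk⟩ := Function.ne_iff.mp hne
    have hlt : ∀ i, x i ≠ xt i →
        0 < (P.gradPsi x - P.gradPsi xt) i * (x - xt) i := by
      intro i hi
      simp only [Pi.sub_apply, PsiSetting.gradPsi]
      rcases lt_or_gt_of_ne hi with h | h
      · have := aux_strictMono P i (hcx.1 i) (hcxt.1 i) h
        exact mul_pos_of_neg_of_neg (by linarith) (by linarith)
      · have := aux_strictMono P i (hcxt.1 i) (hcx.1 i) h
        exact mul_pos (by linarith) (by linarith)
    refine Finset.sum_pos' (fun i _ => ?_) ⟨k, Finset.mem_univ _, hlt k hk⟩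
    by_cases h : x i = xt i
    · simp [h]
    · exact (hlt i h).le
  have hz : 0 ≤ dotp (P.gradPsi x - P.gradPsi xt) (x - xt)
      - dotp (S.gradF x - S.gradF xt) (x - xt) := by
    unfold dotp
    rw [← Finset.sum_sub_distrib]
    refine Finset.sum_nonneg fun i _ => ?_
    have e : (P.gradPsi x - P.gradPsi xt) i * (x - xt) i
        - (S.gradF x - S.gradF xt) i * (x - xt) i
        = (zmap S P x i - zmap S P xt i) * (x i - xt i) := by
      simp only [Pi.sub_apply, PsiSetting.gradPsi, zmap]; ring
    rw [e]
    have hm := aux_mono S.h𝒞 (P.dψ i) (aux_strictMono P i) (fun h => P.hodd h i)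
      (α i) (hα i).1
    rcases lt_trichotomy (x i) (xt i) with h | h | h
    · have := hm _ _ _ _ (hcx.1 i) (hcxt.1 i) h (hcx.2 i) (hcxt.2 i)
      exact mul_nonneg_of_nonpos_of_nonpos (by linarith) (by linarith)
    · simp [h]
    · have := hm _ _ _ _ (hcxt.1 i) (hcx.1 i) h (hcxt.2 i) (hcx.2 i)
      exact mul_nonneg (by linarith) (by linarith)
  nlinarith
end
end

section
/- Assume F := G_y(A·) satisfies the BRSC property with respect to Ψ, a set X ⊆ C^N, and K, with constant C_K > 0, and that the concavity condition (CC) holds. Let x ∈ X be a critical point of J_Ψ such that for every i, |z_i(x)| does not belong to [C_K(ψ_i'(α_i) − ψ_i'(0)) + ψ_i'(0), (ψ_i'(α_i) − ψ_i'(0))/C_K + ψ_i'(0)], and suppose 1 + K − 2‖x‖₀ > 0 and λ₀ > F(x)/(1 + K − 2‖x‖₀). Then x is the unique global minimizer of J_Ψ over C^N (and also the unique global minimizer of J₀), and every critical point x' ∈ C^N of J_Ψ with x' ≠ x satisfies ‖x' − x‖₀ > K. -/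
open Classical

noncomputable section

/-- the concavity condition (CC). -/
def CCond {M N : ℕ} (S : FidSetting M N) (P : PsiSetting N S.𝒞) (α : Fin N → ℝ)
    (lam0 : ℝ) : Prop :=
  ∀ x ∈ S.feas, ∀ i : Fin N,
    StrictConcaveOn ℝ (Set.Ioo (-(α i)) 0) (fun t => JPsi S P α lam0 (Function.update x i t)) ∧
    StrictConcaveOn ℝ (Set.Ioo 0 (α i)) (fun t => JPsi S P α lam0 (Function.update x i t))

structure OneD (C : Set ℝ) (ψ dψ : ℝ → ℝ) (α lam : ℝ) : Prop where
  hC : C = Set.univ ∨ C = Set.Ici 0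
  grad : ∀ s ∈ C, ∀ t ∈ C, s ≠ t → ψ s + dψ s * (t - s) < ψ t
  even : C = Set.univ → ∀ t, ψ (-t) = ψ t
  odd : C = Set.univ → ∀ t, dψ (-t) = - dψ t
  nn : 0 ≤ dψ 0
  hα : 0 < α
  hl : ψ 0 - ψ α + dψ α * α = lam

def bet (ψ dψ : ℝ → ℝ) (α lam t : ℝ) : ℝ :=
  if |t| ≤ α then ψ 0 - ψ t + Real.sign t * dψ α * t else lam

def GoodPt (C : Set ℝ) (dψ : ℝ → ℝ) (α CK x z : ℝ) : Prop :=
  (C = Set.univ ∧ x = 0 ∧ |z| < CK * dψ α ∧ CK ≤ 1) ∨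
  (α < |x| ∧ z = dψ x ∧ dψ α - dψ 0 < CK * (dψ |x| - dψ 0))

namespace OneD
variable {C : Set ℝ} {ψ dψ : ℝ → ℝ} {α lam : ℝ}

lemma memC (h : OneD C ψ dψ α lam) {t : ℝ} (ht : 0 ≤ t) : t ∈ C := by
  rcases h.hC with h | h <;> simp [h, ht]

lemma cases (h : OneD C ψ dψ α lam) {t : ℝ} (ht : t ∈ C) : 0 ≤ t ∨ (C = Set.univ ∧ t < 0) := by
  rcases h.hC with h | h
  · rcases le_or_gt 0 t with h1 | h1
    · exact Or.inl h1
    · exact Or.inr ⟨h, h1⟩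
  · left; simpa [h] using ht

lemma mono (h : OneD C ψ dψ α lam) {s t : ℝ} (hs : s ∈ C) (ht : t ∈ C) (hst : s < t) :
    dψ s < dψ t := by
  have h1 := h.grad s hs t ht hst.ne
  have h2 := h.grad t ht s hs hst.ne'
  nlinarith

lemma monole (h : OneD C ψ dψ α lam) {s t : ℝ} (hs : s ∈ C) (ht : t ∈ C) (hst : s ≤ t) :
    dψ s ≤ dψ t := by
  rcases hst.eq_or_lt with rfl | h1
  · rfl
  · exact (h.mono hs ht h1).le

lemma gradle (h : OneD C ψ dψ α lam) {s t : ℝ} (hs : s ∈ C) (ht : t ∈ C) :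
    ψ s + dψ s * (t - s) ≤ ψ t := by
  by_cases e : s = t
  · simp [e]
  · exact (h.grad s hs t ht e).le

lemma d0 (h : OneD C ψ dψ α lam) (hC : C = Set.univ) : dψ 0 = 0 := by
  have := h.odd hC 0
  simp at this; linarith

lemma psi_abs (h : OneD C ψ dψ α lam) {t : ℝ} (ht : t ∈ C) : ψ |t| = ψ t := by
  rcases h.cases ht with h1 | ⟨h1, h2⟩
  · rw [abs_of_nonneg h1]
  · rw [abs_of_neg h2, h.even h1]

lemma sign_abs (t : ℝ) : Real.sign t * t = |t| := by
  rcases lt_trichotomy t 0 with h | h | h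
  · rw [Real.sign_of_neg h, abs_of_neg h]; ring
  · simp [h]
  · rw [Real.sign_of_pos h, abs_of_pos h]; ring

lemma bet_small {t : ℝ} (ht : |t| ≤ α) :
    bet ψ dψ α lam t = ψ 0 - ψ t + dψ α * |t| := by
  rw [bet, if_pos ht, ← sign_abs]; ring

lemma bet_big (h : OneD C ψ dψ α lam) {t : ℝ} (htC : t ∈ C) (ht : α ≤ |t|) :
    bet ψ dψ α lam t = lam := by
  rcases ht.eq_or_lt with e | e
  · rw [bet_small e.ge, ← h.psi_abs htC, ← e, h.hl]
  · rw [bet, if_neg (not_le.2 e)]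

lemma bet_zero (h : OneD C ψ dψ α lam) : bet ψ dψ α lam 0 = 0 := by
  rw [bet_small (by simpa using h.hα.le)]; simp

lemma bet_le (h : OneD C ψ dψ α lam) {t : ℝ} (htC : t ∈ C) : bet ψ dψ α lam t ≤ lam := by
  rcases le_total (|t|) α with e | e
  · rw [bet_small e, ← h.psi_abs htC]
    have := h.gradle (h.memC h.hα.le) (h.memC (abs_nonneg t))
    have := h.hl
    nlinarith
  · exact (h.bet_big htC e).le

lemma bet_abs (h : OneD C ψ dψ α lam) {t : ℝ} (htC : t ∈ C) :
    bet ψ dψ α lam |t| = bet ψ dψ α lam t := by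
  rcases le_total (|t|) α with e | e
  · rw [bet_small e, bet_small (by simpa using e), h.psi_abs htC, abs_abs]
  · rw [h.bet_big htC e, h.bet_big (h.memC (abs_nonneg t)) (by simpa using e)]

lemma phi_pos_big (h : OneD C ψ dψ α lam) {CK x t : ℝ} (hCK : 0 < CK) (hx : α < x)
    (hd : dψ α - dψ 0 < CK * (dψ x - dψ 0)) (ht : 0 ≤ t) (htx : t ≠ x) :
    0 < CK * (ψ t - ψ x - dψ x * (t - x)) + bet ψ dψ α lam t - lam := by
  have hα := h.hα
  have xC := h.memC (hα.le.trans hx.le)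
  have aC := h.memC hα.le
  have tC := h.memC ht
  have hg := h.grad x xC t tC htx.symm
  rcases le_or_gt α t with e | e
  · rw [h.bet_big tC (by rwa [abs_of_nonneg ht])]
    have := mul_pos hCK (show 0 < ψ t - ψ x - dψ x * (t - x) by linarith)
    linarith
  · rw [bet_small (by rw [abs_of_nonneg ht]; exact e.le), abs_of_nonneg ht, ← h.hl]
    have h1 := h.grad x xC α aC hx.ne'
    have h2 := h.gradle tC aC
    have h3 := h.monole (h.memC le_rfl) tC ht
    have h4 := h.grad α aC t tC e.ne'
    have h5 := h.mono aC xC hx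
    have P1 := mul_pos hCK (show 0 < ψ α - ψ x - dψ x * (α - x) by linarith)
    rcases le_total CK 1 with c | c
    · have P2 : ψ t - ψ α - dψ α * (t - α) ≤ (dψ α - dψ 0) * (α - t) := by nlinarith
      have P3 := mul_le_mul_of_nonneg_left P2 (sub_nonneg.2 c)
      have P4 := mul_pos (sub_pos.2 hd) (sub_pos.2 e)
      nlinarith
    · have P2 := mul_nonneg (sub_nonneg.2 c) (show 0 ≤ ψ t - ψ α - dψ α * (t - α) by linarith)
      have P3 := mul_pos hCK (mul_pos (sub_pos.2 h5) (sub_pos.2 e))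
      nlinarith

lemma phi_pos_big' (h : OneD C ψ dψ α lam) {CK x t : ℝ} (hCK : 0 < CK) (hx : α < x)
    (hd : dψ α - dψ 0 < CK * (dψ x - dψ 0)) (ht : t ∈ C) (htx : t ≠ x) :
    0 < CK * (ψ t - ψ x - dψ x * (t - x)) + bet ψ dψ α lam t - lam := by
  rcases h.cases ht with h1 | ⟨h1, h2⟩
  · exact h.phi_pos_big hCK hx hd h1 htx
  · have hx0 : 0 < dψ x := lt_of_le_of_lt h.nn
      (h.mono (h.memC le_rfl) (h.memC (h.hα.trans hx).le) (h.hα.trans hx))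
    have key : 0 ≤ CK * (ψ |t| - ψ x - dψ x * (|t| - x)) + bet ψ dψ α lam |t| - lam := by
      by_cases e : |t| = x
      · rw [e, h.bet_big (h.memC (h.hα.trans hx).le) (by rw [abs_of_pos (h.hα.trans hx)]; exact hx.le)]
        simp
      · exact (h.phi_pos_big hCK hx hd (abs_nonneg t) e).le
    rw [h.psi_abs ht, h.bet_abs ht, abs_of_neg h2] at key
    have := mul_pos (mul_pos hCK hx0) (neg_pos.2 h2)
    nlinarith

lemma phi_pos (h : OneD C ψ dψ α lam) {CK x z t : ℝ} (hCK : 0 < CK) (hxC : x ∈ C)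
    (hx : GoodPt C dψ α CK x z) (ht : t ∈ C) (htx : t ≠ x) :
    0 < (dψ x - z) * (t - x) + CK * (ψ t - ψ x - dψ x * (t - x))
      + (bet ψ dψ α lam t - bet ψ dψ α lam x) := by
  have hα := h.hα
  rcases hx with ⟨hC, rfl, hz, hc⟩ | ⟨hx, rfl, hd⟩
  · rw [h.bet_zero, h.d0 hC]
    have aC := h.memC hα.le
    have ht0 : 0 < |t| := abs_pos.2 htx
    have P1 := mul_pos (sub_pos.2 hz) ht0
    have P2 : z * t ≤ |z| * |t| := by rw [← abs_mul]; exact le_abs_self _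
    rcases le_total (|t|) α with e | e
    · rw [bet_small e]
      have h1 := h.gradle (h.memC (abs_nonneg t)) (h.memC le_rfl)
      have h2 := h.monole (h.memC (abs_nonneg t)) aC e
      rw [h.psi_abs ht] at h1
      have P3 := mul_le_mul_of_nonneg_right h2 ht0.le
      have P4 := mul_nonneg (sub_nonneg.2 hc) (show 0 ≤ dψ α * |t| + ψ 0 - ψ t by linarith)
      nlinarith
    · rw [h.bet_big ht e]
      have h1 := h.gradle aC (h.memC (abs_nonneg t))
      rw [h.psi_abs ht] at h1
      have hl := h.hl
      have h2 := h.grad α aC 0 (h.memC le_rfl) hα.ne'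
      have P3 := mul_le_mul_of_nonneg_left h1 hCK.le
      have P4 : 0 ≤ (1 - CK) * lam := mul_nonneg (sub_nonneg.2 hc) (by nlinarith)
      subst hl
      nlinarith
  · rw [h.bet_big hxC hx.le]
    rcases h.cases hxC with h1 | ⟨h1, h2⟩
    · rw [abs_of_nonneg h1] at hx hd
      have := h.phi_pos_big' hCK hx hd ht htx
      linarith
    · rw [abs_of_neg h2] at hx hd
      have tC' : -t ∈ C := by simp [h1]
      have := h.phi_pos_big' hCK hx hd tC' (fun e => htx (by linarith))
      rw [← h.bet_abs tC', abs_neg, h.bet_abs ht, h.even h1, h.even h1, h.odd h1] at this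
      nlinarith

lemma crit_nn (h : OneD C ψ dψ α lam) {t w : ℝ} (ht : 0 ≤ t) (hw : w ∈ subdiffH C dψ α t) :
    (α < t → w = dψ t) ∧ (t ≤ α → w ≤ dψ α) ∧ (0 < t → t ≤ α → w = dψ α) := by
  unfold subdiffH at hw
  have hα := h.hα
  split_ifs at hw with a b c d
  · subst b
    exact ⟨fun h => by linarith, fun _ => hw.2, fun h => by linarith⟩
  · rw [abs_of_nonneg ht] at c
    have : 0 < t := lt_of_le_of_ne ht (Ne.symm b)
    rw [Real.sign_of_pos this] at hw
    have hw : w = dψ α := by simpa using hw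
    exact ⟨fun h => by linarith, fun _ => hw.le, fun _ _ => hw⟩
  · rw [abs_of_nonneg ht] at c
    exact ⟨fun _ => hw, fun h => by linarith, fun _ h => by linarith⟩
  · have hw : w = dψ α := hw
    exact ⟨fun h => by linarith, fun _ => hw.le, fun _ _ => hw⟩
  · exact ⟨fun _ => hw, fun h => by linarith, fun _ h => by linarith⟩

lemma crit_neg (h : OneD C ψ dψ α lam) (hC : C = Set.univ) {t w : ℝ}
    (hw : w ∈ subdiffH C dψ α t) : -w ∈ subdiffH C dψ α (-t) := by
  unfold subdiffH at hw ⊢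
  rw [if_pos hC] at hw ⊢
  simp only [neg_eq_zero, abs_neg, Real.sign_neg, h.odd hC]
  split_ifs at hw ⊢ with a b
  · exact ⟨by linarith [hw.2], by linarith [hw.1]⟩
  · have : w = _ := hw
    simp [this]
  · have : w = _ := hw
    simp [this]

lemma crit_zero (h : OneD C ψ dψ α lam) {CK z t w : ℝ} (hCK : 0 < CK) (hc : CK ≤ 1)
    (hC : C = Set.univ) (hz : |z| < CK * dψ α) (ht : 0 < t) (hw : w ∈ subdiffH C dψ α t) :
    (1 - CK) * ((dψ 0 - dψ t) * (0 - t)) < (z - w) * (0 - t) := by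
  obtain ⟨h1, -, h2⟩ := h.crit_nn ht.le hw
  rw [h.d0 hC]
  have aC := h.memC h.hα.le
  have tC := h.memC ht.le
  have hz' := (le_abs_self z).trans_lt hz
  have : (1 - CK) * dψ t + CK * dψ α ≤ w := by
    rcases le_or_gt t α with e | e
    · rw [h2 ht e]
      have := mul_le_mul_of_nonneg_left (h.monole tC aC e) (sub_nonneg.2 hc)
      linarith
    · rw [h1 e]
      have := mul_le_mul_of_nonneg_left (h.monole aC tC e.le) hCK.le
      linarith
  have := mul_pos ht (show 0 < w - z - (1 - CK) * dψ t by linarith)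
  nlinarith

lemma crit_big (h : OneD C ψ dψ α lam) {CK x t w : ℝ} (hCK : 0 < CK) (hx : α < x)
    (hd : dψ α - dψ 0 < CK * (dψ x - dψ 0)) (ht : t ∈ C) (htx : t ≠ x)
    (hw : w ∈ subdiffH C dψ α t) :
    (1 - CK) * ((dψ x - dψ t) * (x - t)) < (dψ x - w) * (x - t) := by
  have hα := h.hα
  have xC := h.memC (hα.trans hx).le
  have aC := h.memC hα.le
  have h5 := h.mono aC xC hx
  rcases h.cases ht with t0 | ⟨hC, t0⟩
  · obtain ⟨h1, h2, -⟩ := h.crit_nn t0 hw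
    rcases le_or_gt t α with e | e
    · have hw := h2 e
      have h3 := h.monole (h.memC le_rfl) ht t0
      have h4 := h.monole ht aC e
      have : (1 - CK) * (dψ x - dψ t) < dψ x - w := by
        rcases le_total CK 1 with c | c
        · have := mul_le_mul_of_nonneg_left h3 (sub_nonneg.2 c)
          nlinarith
        · have := mul_nonneg (sub_nonneg.2 c) (show 0 ≤ dψ x - dψ t by linarith)
          nlinarith
      have := mul_pos (sub_pos.2 this) (show 0 < x - t by linarith)
      nlinarith
    · rw [h1 e]
      have : 0 < (dψ x - dψ t) * (x - t) := by
        rcases lt_or_gt_of_ne htx with g | g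
        · exact mul_pos (sub_pos.2 (h.mono ht xC g)) (sub_pos.2 g)
        · exact mul_pos_of_neg_of_neg (sub_neg.2 (h.mono xC ht g)) (sub_neg.2 g)
      have := mul_pos hCK this
      nlinarith
  · have hn := h.crit_neg hC hw
    have t1 : 0 < -t := by linarith
    obtain ⟨h1, -, h2⟩ := h.crit_nn t1.le hn
    rw [h.odd hC] at h1
    have tC := h.memC t1.le
    have h0 := h.d0 hC
    have h3 := h.mono (h.memC le_rfl) tC t1
    rw [h.odd hC] at h3
    have ha := h.mono (h.memC le_rfl) aC hα
    have hw' : w ≤ dψ t := by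
      rcases le_or_gt (-t) α with e | e
      · have := h2 t1 e
        have := h.monole tC aC e
        rw [h.odd hC] at this
        linarith
      · linarith [h1 e]
    have : (1 - CK) * (dψ x - dψ t) < dψ x - w := by
      have := mul_pos hCK (show 0 < dψ x - dψ t by linarith)
      nlinarith
    have := mul_pos (sub_pos.2 this) (show 0 < x - t by linarith)
    nlinarith

lemma crit_pos (h : OneD C ψ dψ α lam) {CK x z t w : ℝ} (hCK : 0 < CK) (hxC : x ∈ C)
    (hx : GoodPt C dψ α CK x z) (ht : t ∈ C) (htx : t ≠ x) (hw : w ∈ subdiffH C dψ α t) :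
    (1 - CK) * ((dψ x - dψ t) * (x - t)) < (z - w) * (x - t) := by
  rcases hx with ⟨hC, rfl, hz, hc⟩ | ⟨hx, rfl, hd⟩
  · rcases lt_or_gt_of_ne htx with g | g
    · have := h.crit_zero (z := -z) hCK hc hC (by rwa [abs_neg]) (neg_pos.2 g) (h.crit_neg hC hw)
      rw [h.odd hC, h.d0 hC] at this
      rw [h.d0 hC]
      nlinarith
    · exact h.crit_zero hCK hc hC hz g hw
  · rcases h.cases hxC with h1 | ⟨h1, h2⟩
    · rw [abs_of_nonneg h1] at hx hd
      exact h.crit_big hCK hx hd ht htx hw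
    · rw [abs_of_neg h2] at hx hd
      have := h.crit_big hCK hx hd (t := -t) (by simp [h1]) (fun e => htx (by linarith))
        (h.crit_neg h1 hw)
      rw [h.odd h1, h.odd h1] at this
      nlinarith

end OneD
lemma OneD.good_of {C : Set ℝ} {ψ dψ : ℝ → ℝ} {α lam : ℝ} (h : OneD C ψ dψ α lam)
    {CK x z : ℝ} (hCK : 0 < CK) (hxC : x ∈ C) (hz : z ∈ subdiffH C dψ α x)
    (hn : |z| ∉ Set.Icc (CK * (dψ α - dψ 0) + dψ 0) ((dψ α - dψ 0) / CK + dψ 0))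
    (hle : |x| ≤ α → CK ≤ 1) : GoodPt C dψ α CK x z := by
  have hα := h.hα
  have aC := h.memC hα.le
  have zC := h.memC le_rfl
  have ha := h.mono zC aC hα
  have h00 := h.nn
  have up : CK ≤ 1 → dψ α - dψ 0 ≤ (dψ α - dψ 0) / CK := fun hc => by
    rw [le_div_iff₀ hCK]; nlinarith
  have nope : |z| = dψ α → CK ≤ 1 → False := by
    intro e hc
    apply hn
    rw [e]
    exact ⟨by nlinarith, by linarith [up hc]⟩
  rcases le_or_gt (|x|) α with e | e
  · have hc := hle e
    unfold subdiffH at hz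
    split_ifs at hz with a b c
    · left
      refine ⟨a, b, ?_, hc⟩
      have hz' : |z| ≤ dψ α := abs_le.2 hz
      by_contra hcon
      push Not at hcon
      apply hn
      have := up hc
      rw [h.d0 a] at this ⊢
      exact ⟨by linarith, by linarith⟩
    · exfalso
      refine nope ?_ hc
      have : z = _ := hz
      rw [this]
      rcases lt_or_gt_of_ne b with g | g
      · rw [Real.sign_of_neg g, neg_one_mul, abs_neg, abs_of_nonneg (by linarith)]
      · rw [Real.sign_of_pos g, one_mul, abs_of_nonneg (by linarith)]
    · exfalso
      refine nope ?_ hc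
      have : z = _ := hz
      rw [this, abs_of_nonneg (by linarith)]
    · exfalso
      have := (le_abs_self x).trans e
      contradiction
  · right
    have hzx : z = dψ x := by
      unfold subdiffH at hz
      split_ifs at hz with a b c c
      · rw [b, abs_zero] at e; linarith
      · linarith
      · exact hz
      · rcases h.cases hxC with g | ⟨g, -⟩
        · rw [abs_of_nonneg g] at e; linarith
        · contradiction
      · exact hz
    have xC := h.memC (abs_nonneg x)
    have hx := h.mono aC xC e
    have habs : |z| = dψ |x| := by
      rw [hzx]
      rcases h.cases hxC with g | ⟨g, g'⟩
      · rw [abs_of_nonneg g] at hx ⊢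
        rw [abs_of_nonneg (by linarith)]
      · rw [abs_of_neg g'] at hx ⊢
        rw [h.odd g] at hx ⊢
        rw [abs_of_neg (by linarith)]
    refine ⟨e, hzx, ?_⟩
    by_contra hcon
    push Not at hcon
    rw [habs] at hn
    rcases le_total CK 1 with c | c
    · apply hn
      refine ⟨by nlinarith, ?_⟩
      have : dψ |x| - dψ 0 ≤ (dψ α - dψ 0) / CK := by
        rw [le_div_iff₀ hCK]; linarith
      linarith
    · nlinarith

lemma concave_Icc {f : ℝ → ℝ} {a b : ℝ} (hab : a < b) (hf : ConcaveOn ℝ (Set.Ioo a b) f)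
    (hc : ContinuousOn f (Set.Icc a b)) : ConcaveOn ℝ (Set.Icc a b) f := by
  refine ⟨convex_Icc a b, ?_⟩
  intro x hx y hy p q hp hq hpq
  set m := (a + b) / 2 with hm
  have mem : ∀ u ∈ Set.Icc a b, ∀ e ∈ Set.Ioc (0:ℝ) 1, (1 - e) * u + e * m ∈ Set.Ioo a b := by
    intro u hu e he
    have h1 := mul_nonneg (sub_nonneg.2 he.2) (sub_nonneg.2 hu.1)
    have h2 := mul_nonneg (sub_nonneg.2 he.2) (sub_nonneg.2 hu.2)
    have h3 := mul_pos he.1 (show 0 < m - a by linarith)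
    have h4 := mul_pos he.1 (show 0 < b - m by linarith)
    constructor <;> nlinarith
  have tend : ∀ u ∈ Set.Icc a b, Filter.Tendsto (fun e : ℝ => f ((1 - e) * u + e * m))
      (nhdsWithin 0 (Set.Ioc 0 1)) (nhds (f u)) := by
    intro u hu
    refine Filter.Tendsto.comp (hc u hu) ?_
    refine tendsto_nhdsWithin_of_tendsto_nhds_of_eventually_within _ ?_ ?_
    · have : Continuous (fun e : ℝ => (1 - e) * u + e * m) := by fun_prop
      have := this.tendsto 0
      simp only [sub_zero, one_mul, zero_mul, add_zero] at this
      exact this.mono_left nhdsWithin_le_nhds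
    · filter_upwards [self_mem_nhdsWithin] with e he
      exact Set.Ioo_subset_Icc_self (mem u hu e he)
  have hw : p • x + q • y ∈ Set.Icc a b := (convex_Icc a b) hx hy hp hq hpq
  have : (nhdsWithin (0:ℝ) (Set.Ioc 0 1)).NeBot := by
    rw [nhdsWithin_Ioc_eq_nhdsGT one_pos]; infer_instance
  refine le_of_tendsto_of_tendsto (((tend x hx).const_mul p).add ((tend y hy).const_mul q))
    (tend _ hw) ?_
  filter_upwards [self_mem_nhdsWithin] with e he
  have := hf.2 (mem x hx e he) (mem y hy e he) hp hq hpq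
  simp only [smul_eq_mul] at this ⊢
  have e2 : p * ((1 - e) * x + e * m) + q * ((1 - e) * y + e * m)
      = (1 - e) * (p * x + q * y) + e * m := by
    have : q = 1 - p := by linarith
    subst this; ring
  rwa [e2] at this

lemma concave_grad {f : ℝ → ℝ} {I : Set ℝ} {f' x t : ℝ} (hf : ConcaveOn ℝ I f)
    (hx : x ∈ I) (ht : t ∈ I) (hd : HasDerivWithinAt f f' I x) :
    f t ≤ f x + f' * (t - x) := by
  rcases lt_trichotomy x t with g | rfl | g
  · have := hf.slope_le_of_hasDerivWithinAt hx ht g hd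
    rw [slope_def_field, div_le_iff₀ (sub_pos.2 g)] at this
    linarith
  · simp
  · have := hf.le_slope_of_hasDerivWithinAt ht hx g hd
    rw [slope_def_field, le_div_iff₀ (sub_pos.2 g)] at this
    linarith

lemma oneD_of {N : ℕ} {C : Set ℝ} (hC : C = Set.univ ∨ C = Set.Ici 0) (P : PsiSetting N C)
    {lam0 : ℝ} {α : Fin N → ℝ}
    (hα : ∀ i, 0 < α i ∧ dBreg (P.ψ i) (P.dψ i) 0 (α i) = lam0) (i : Fin N) :
    OneD C (P.ψ i) (P.dψ i) (α i) lam0 where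
  hC := hC
  grad := by
    intro s hs t ht hst
    rcases lt_or_gt_of_ne hst with g | g
    · have := (P.hconv i).lt_slope_of_hasDerivWithinAt hs ht g (P.hderiv i s hs)
      rw [slope_def_field, lt_div_iff₀ (sub_pos.2 g)] at this
      linarith
    · have := (P.hconv i).slope_lt_of_hasDerivWithinAt ht hs g (P.hderiv i s hs)
      rw [slope_def_field, div_lt_iff₀ (sub_pos.2 g)] at this
      linarith
  even := by
    intro hu t
    have hd : ∀ s, HasDerivAt (P.ψ i) (P.dψ i s) s := by
      intro s
      have := P.hderiv i s (by simp [hu])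
      exact this.hasDerivAt (by simp [hu])
    have hd2 : ∀ s, HasDerivAt (fun s => P.ψ i (-s) - P.ψ i s) 0 s := by
      intro s
      have h1 := ((hd (-s)).scomp s (hasDerivAt_neg s)).sub (hd s)
      have e : (-1 : ℝ) • P.dψ i (-s) - P.dψ i s = 0 := by
        rw [P.hodd hu]; simp
      rw [e] at h1
      exact h1
    have := is_const_of_deriv_eq_zero (fun s => (hd2 s).differentiableAt)
      (fun s => (hd2 s).deriv) t 0
    simp at this
    linarith
  odd := fun hu t => P.hodd hu i t
  nn := by
    rcases hC with h | h
    · have := P.hodd h i 0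
      simp at this; linarith
    · exact P.hnn h i
  hα := (hα i).1
  hl := by
    have := (hα i).2
    unfold dBreg at this
    linarith

lemma feas_line {M N : ℕ} (S : FidSetting M N) {x x' : Fin N → ℝ} (hx : x ∈ S.feas)
    (hx' : x' ∈ S.feas) {s : ℝ} (hs : s ∈ Set.Icc (0:ℝ) 1) (i : Fin N) :
    x i + s * (x' i - x i) ∈ S.𝒞 := by
  rcases S.h𝒞 with h | h
  · simp [h]
  · have h1 := hx i
    have h2 := hx' i
    rw [h] at h1 h2 ⊢
    simp only [Set.mem_Ici] at *
    nlinarith [mul_nonneg hs.1 h2, mul_nonneg (sub_nonneg.2 hs.2) h1]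

lemma F_line {M N : ℕ} (S : FidSetting M N) {x x' : Fin N → ℝ} (hx : x ∈ S.feas)
    (hx' : x' ∈ S.feas) {s : ℝ} (hs : s ∈ Set.Icc (0:ℝ) 1) :
    HasDerivAt (fun s : ℝ => S.F (x + s • (x' - x)))
      (dotp (S.gradF (x + s • (x' - x))) (x' - x)) s := by
  have e : dotp (S.gradF (x + s • (x' - x))) (x' - x)
      = ∑ j, S.dg j (S.A.mulVec (x + s • (x' - x)) j) * (S.A.mulVec (x' - x) j) := by
    simp only [dotp, FidSetting.gradF, Finset.sum_mul]
    rw [Finset.sum_comm]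
    refine Finset.sum_congr rfl fun j _ => ?_
    simp only [Matrix.mulVec, dotProduct, Finset.mul_sum]
    refine Finset.sum_congr rfl fun i _ => ?_
    ring
  rw [e]
  unfold FidSetting.F
  refine HasDerivAt.fun_sum fun j _ => ?_
  have hin := S.hdom (x + s • (x' - x)) (fun i => feas_line S hx hx' hs i) j
  have h1 := S.hg_deriv j _ hin
  have h2 : HasDerivAt (fun s : ℝ => S.A.mulVec (x + s • (x' - x)) j)
      (S.A.mulVec (x' - x) j) s := by
    have : (fun s : ℝ => S.A.mulVec (x + s • (x' - x)) j)
        = fun s => S.A.mulVec x j + s * S.A.mulVec (x' - x) j := by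
      funext s
      rw [Matrix.mulVec_add, Matrix.mulVec_smul]; rfl
    rw [this]
    simpa using ((hasDerivAt_id s).mul_const (S.A.mulVec (x' - x) j)).const_add (S.A.mulVec x j)
  exact HasDerivAt.comp s h1 h2

lemma F_upd {M N : ℕ} (S : FidSetting M N) {x : Fin N → ℝ} (i : Fin N) {t : ℝ}
    (ht : Function.update x i t ∈ S.feas) :
    HasDerivAt (fun t : ℝ => S.F (Function.update x i t))
      (S.gradF (Function.update x i t) i) t := by
  unfold FidSetting.F FidSetting.gradF
  refine HasDerivAt.fun_sum fun j _ => ?_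
  have h1 := S.hg_deriv j _ (S.hdom _ ht j)
  have h2 : HasDerivAt (fun s : ℝ => S.A.mulVec (Function.update x i s) j) (S.A j i) t := by
    have : (fun s : ℝ => S.A.mulVec (Function.update x i s) j)
        = fun s => s * S.A j i + ∑ k ∈ Finset.univ.erase i, S.A j k * x k := by
      funext s
      simp only [Matrix.mulVec, dotProduct]
      rw [← Finset.add_sum_erase _ _ (Finset.mem_univ i)]
      congr 1
      · simp [mul_comm]
      · refine Finset.sum_congr rfl fun k hk => ?_
        rw [Function.update_of_ne (Finset.ne_of_mem_erase hk)]
    rw [this]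
    simpa using ((hasDerivAt_id t).mul_const (S.A j i)).add_const
      (∑ k ∈ Finset.univ.erase i, S.A j k * x k)
  rw [mul_comm]
  exact HasDerivAt.comp t h1 h2
lemma breg_ineq {M N : ℕ} (S : FidSetting M N) (P : PsiSetting N S.𝒞)
    {X : Set (Fin N → ℝ)} (hXfeas : X ⊆ S.feas) {K : ℕ} {CK : ℝ}
    (hBRSC : BRSCholds S P X K CK) {x x' : Fin N → ℝ} (hx : x ∈ X) (hx' : x' ∈ S.feas)
    (hK : norm0 (x - x') ≤ K) :
    S.F x + dotp (S.gradF x) (x' - x)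
      + CK * ∑ i, (P.ψ i (x' i) - P.ψ i (x i) - P.dψ i (x i) * (x' i - x i)) ≤ S.F x' := by
  by_cases hne : x = x'
  · subst hne; simp [dotp]
  have hxf := hXfeas hx
  set v := x' - x with hv
  have hvi : ∀ i, v i = x' i - x i := fun i => rfl
  let q : ℝ → ℝ := fun s => S.F (x + s • v) - s * dotp (S.gradF x) v
    - CK * ∑ i, (P.ψ i (x i + s * v i) - s * (P.dψ i (x i) * v i))
  let q' : ℝ → ℝ := fun s => dotp (S.gradF (x + s • v)) v - dotp (S.gradF x) v
    - CK * ∑ i, (P.dψ i (x i + s * v i) * v i - P.dψ i (x i) * v i)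
  have hq : ∀ s ∈ Set.Icc (0:ℝ) 1, HasDerivWithinAt q (q' s) (Set.Icc 0 1) s := by
    intro s hs
    have h1 := (F_line S hxf hx' hs).hasDerivWithinAt (s := Set.Icc (0:ℝ) 1)
    have h2 : HasDerivWithinAt (fun s : ℝ => s * dotp (S.gradF x) v)
        (dotp (S.gradF x) v) (Set.Icc 0 1) s := by
      simpa using ((hasDerivAt_id s).mul_const (dotp (S.gradF x) v)).hasDerivWithinAt
    have h3 : HasDerivWithinAt
        (fun s : ℝ => ∑ i, (P.ψ i (x i + s * v i) - s * (P.dψ i (x i) * v i)))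
        (∑ i, (P.dψ i (x i + s * v i) * v i - P.dψ i (x i) * v i)) (Set.Icc 0 1) s := by
      refine HasDerivWithinAt.fun_sum fun i _ => ?_
      have a1 : HasDerivWithinAt (fun s : ℝ => x i + s * v i) (v i) (Set.Icc 0 1) s := by
        simpa using (((hasDerivAt_id s).mul_const (v i)).const_add (x i)).hasDerivWithinAt
      have a2 := P.hderiv i _ (feas_line S hxf hx' hs i)
      have a3 := HasDerivWithinAt.comp s a2 a1 (fun r hr => feas_line S hxf hx' hr i)
      have a4 : HasDerivWithinAt (fun s : ℝ => s * (P.dψ i (x i) * v i))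
          (P.dψ i (x i) * v i) (Set.Icc 0 1) s := by
        simpa using ((hasDerivAt_id s).mul_const (P.dψ i (x i) * v i)).hasDerivWithinAt
      exact a3.sub a4
    exact (h1.sub h2).sub (h3.const_mul CK)
  have hmono : MonotoneOn q (Set.Icc 0 1) := by
    refine monotoneOn_of_hasDerivWithinAt_nonneg (f' := q') (convex_Icc 0 1)
      (fun s hs => (hq s hs).continuousWithinAt)
      (fun s hs => (hq s (interior_subset hs)).mono interior_subset) ?_
    intro s hs
    have hs1 := interior_subset hs
    rw [interior_Icc] at hs
    have hs0 : 0 < s := hs.1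
    have hyf : x + s • v ∈ S.feas := fun i => feas_line S hxf hx' hs1 i
    have hdiff : x - (x + s • v) = fun i => -(s * v i) := by
      funext i; simp
    have hb := hBRSC x hx (x + s • v) hyf ?_ ?_
    · rw [hdiff] at hb
      simp only [dotp, PsiSetting.gradPsi, Pi.sub_apply, Pi.add_apply, Pi.smul_apply,
        smul_eq_mul] at hb
      have e1 : ∑ i, (P.dψ i (x i) - P.dψ i (x i + s * v i)) * -(s * v i)
          = s * ∑ i, (P.dψ i (x i + s * v i) * v i - P.dψ i (x i) * v i) := by
        rw [Finset.mul_sum]; exact Finset.sum_congr rfl fun i _ => by ring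
      have e2 : ∑ i, (S.gradF x i - S.gradF (x + s • v) i) * -(s * v i)
          = s * (dotp (S.gradF (x + s • v)) v - dotp (S.gradF x) v) := by
        rw [dotp, dotp, ← Finset.sum_sub_distrib, Finset.mul_sum]
        exact Finset.sum_congr rfl fun i _ => by ring
      rw [e1, e2] at hb
      have : 0 ≤ s * q' s := by simp only [q']; linarith
      exact nonneg_of_mul_nonneg_right this hs0
    · intro e
      apply hne
      funext i
      have := congrFun e i
      simp only [Pi.add_apply, Pi.smul_apply, smul_eq_mul] at this
      have h2 : s * v i = 0 := by linarith
      have h3 : v i = 0 := (mul_eq_zero.1 h2).resolve_left hs0.ne'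
      have := hvi i
      linarith
    · refine le_trans ?_ hK
      unfold norm0
      apply Finset.card_le_card
      intro i
      rw [hdiff]
      simp only [Finset.mem_filter, Finset.mem_univ, true_and, Pi.sub_apply]
      intro h1 h2
      apply h1
      rw [hvi, show x' i - x i = 0 by linarith]; simp
  have := hmono (by simp : (0:ℝ) ∈ Set.Icc (0:ℝ) 1) (by simp : (1:ℝ) ∈ Set.Icc (0:ℝ) 1) zero_le_one
  simp only [q, zero_smul, add_zero, zero_mul, sub_zero, one_smul, one_mul] at this
  have e3 : x + v = x' := by simp [hv]
  have e4 : ∀ i, x i + v i = x' i := fun i => by simp [hv]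
  rw [e3] at this
  simp only [e4] at this
  have e5 : ∑ i, (P.ψ i (x' i) - P.dψ i (x i) * v i) - ∑ i, P.ψ i (x i)
      = ∑ i, (P.ψ i (x' i) - P.ψ i (x i) - P.dψ i (x i) * (x' i - x i)) := by
    rw [← Finset.sum_sub_distrib]
    exact Finset.sum_congr rfl fun i _ => by rw [hvi]; ring
  rw [← e5]
  linarith

lemma claimA {M N : ℕ} (S : FidSetting M N) (P : PsiSetting N S.𝒞) {lam0 : ℝ} {α : Fin N → ℝ}
    (hO : ∀ i, OneD S.𝒞 (P.ψ i) (P.dψ i) (α i) lam0)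
    {X : Set (Fin N → ℝ)} (hXfeas : X ⊆ S.feas) {K : ℕ} {CK : ℝ} (hCK : 0 < CK)
    (hBRSC : BRSCholds S P X K CK) {x x' : Fin N → ℝ} (hx : x ∈ X) (hx' : x' ∈ S.feas)
    (hgood : ∀ i, GoodPt S.𝒞 (P.dψ i) (α i) CK (x i) (zmap S P x i))
    (hne : x' ≠ x) (hK : norm0 (x - x') ≤ K) : JPsi S P α lam0 x < JPsi S P α lam0 x' := by
  have hb := breg_ineq S P hXfeas hBRSC hx hx' hK
  have hnn : ∀ i, x' i ≠ x i → 0 < S.gradF x i * (x' i - x i)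
      + CK * (P.ψ i (x' i) - P.ψ i (x i) - P.dψ i (x i) * (x' i - x i))
      + (betaPen P α lam0 i (x' i) - betaPen P α lam0 i (x i)) := by
    intro i hi
    have := (hO i).phi_pos hCK (hXfeas hx i) (hgood i) (hx' i) hi
    simp only [zmap, sub_sub_cancel] at this
    exact this
  obtain ⟨k, hk⟩ := Function.ne_iff.1 hne
  have hsum : 0 < ∑ i, (S.gradF x i * (x' i - x i)
      + CK * (P.ψ i (x' i) - P.ψ i (x i) - P.dψ i (x i) * (x' i - x i))
      + (betaPen P α lam0 i (x' i) - betaPen P α lam0 i (x i))) := by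
    refine Finset.sum_pos' (fun i _ => ?_) ⟨k, Finset.mem_univ _, hnn k hk⟩
    by_cases e : x' i = x i
    · rw [e]; simp
    · exact (hnn i e).le
  rw [Finset.sum_add_distrib, Finset.sum_add_distrib, ← Finset.mul_sum,
    Finset.sum_sub_distrib (fun i => betaPen P α lam0 i (x' i))] at hsum
  have e : dotp (S.gradF x) (x' - x) = ∑ i, S.gradF x i * (x' i - x i) := rfl
  rw [e] at hb
  unfold JPsi
  linarith

lemma J_upd {M N : ℕ} (S : FidSetting M N) (P : PsiSetting N S.𝒞) (lam0 : ℝ) (α : Fin N → ℝ)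
    (x : Fin N → ℝ) (i : Fin N) (t : ℝ) :
    JPsi S P α lam0 (Function.update x i t) = S.F (Function.update x i t)
      + (betaPen P α lam0 i t + ∑ k ∈ Finset.univ.erase i, betaPen P α lam0 k (x k)) := by
  unfold JPsi
  rw [← Finset.add_sum_erase _ _ (Finset.mem_univ i)]
  congr 2
  · simp
  · refine Finset.sum_congr rfl fun k hk => ?_
    rw [Function.update_of_ne (Finset.ne_of_mem_erase hk)]

lemma upd_feas {M N : ℕ} (S : FidSetting M N) {x : Fin N → ℝ} (hx : x ∈ S.feas) (i : Fin N)
    {t : ℝ} (ht : t ∈ S.𝒞) : Function.update x i t ∈ S.feas := by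
  intro k
  by_cases e : k = i
  · subst e; simpa using ht
  · rw [Function.update_of_ne e]; exact hx k

lemma concJ {M N : ℕ} (S : FidSetting M N) (P : PsiSetting N S.𝒞) {lam0 : ℝ} {α : Fin N → ℝ}
    (hO : ∀ i, OneD S.𝒞 (P.ψ i) (P.dψ i) (α i) lam0) (hCC : CCond S P α lam0)
    {x : Fin N → ℝ} (hx : x ∈ S.feas) (i : Fin N) {a b : ℝ}
    (hI : (a = 0 ∧ b = α i) ∨ (S.𝒞 = Set.univ ∧ a = -(α i) ∧ b = 0)) :
    a < b ∧ (∀ t ∈ Set.Icc a b, t ∈ S.𝒞 ∧ |t| ≤ α i) ∧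
    ConcaveOn ℝ (Set.Icc a b) (fun t => JPsi S P α lam0 (Function.update x i t)) := by
  have hα := (hO i).hα
  have hab : a < b := by
    rcases hI with ⟨rfl, rfl⟩ | ⟨_, rfl, rfl⟩ <;> linarith
  have hmem : ∀ t ∈ Set.Icc a b, t ∈ S.𝒞 ∧ |t| ≤ α i := by
    intro t ht
    rcases hI with ⟨rfl, rfl⟩ | ⟨h, rfl, rfl⟩
    · exact ⟨(hO i).memC ht.1, by rw [abs_of_nonneg ht.1]; exact ht.2⟩
    · exact ⟨by simp [h], by rw [abs_of_nonpos ht.2]; linarith [ht.1]⟩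
  refine ⟨hab, hmem, concave_Icc hab ?_ ?_⟩
  · rcases hI with ⟨rfl, rfl⟩ | ⟨_, rfl, rfl⟩
    · exact (hCC x hx i).2.concaveOn
    · exact (hCC x hx i).1.concaveOn
  · have : ContinuousOn (fun t => S.F (Function.update x i t)
      + ((P.ψ i 0 - P.ψ i t + P.dψ i (α i) * |t|)
        + ∑ k ∈ Finset.univ.erase i, betaPen P α lam0 k (x k))) (Set.Icc a b) := by
      have c1 : ContinuousOn (fun t => S.F (Function.update x i t)) (Set.Icc a b) := fun t ht =>
        (F_upd S i (upd_feas S hx i (hmem t ht).1)).continuousAt.continuousWithinAt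
      have c2 : ContinuousOn (P.ψ i) (Set.Icc a b) := fun t ht =>
        (P.hderiv i t (hmem t ht).1).continuousWithinAt.mono (fun r hr => (hmem r hr).1)
      fun_prop
    refine this.congr fun t ht => ?_
    rw [J_upd]
    congr 2
    exact OneD.bet_small (hmem t ht).2

lemma exI {M N : ℕ} (S : FidSetting M N) (P : PsiSetting N S.𝒞) {lam0 : ℝ} {α : Fin N → ℝ}
    (hO : ∀ i, OneD S.𝒞 (P.ψ i) (P.dψ i) (α i) lam0) (i : Fin N) {t : ℝ} (ht : t ∈ S.𝒞)
    (hta : |t| ≤ α i) : ∃ a b, t ∈ Set.Icc a b ∧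
      ((a = 0 ∧ b = α i) ∨ (S.𝒞 = Set.univ ∧ a = -(α i) ∧ b = 0)) := by
  have := abs_le.1 hta
  rcases (hO i).cases ht with h | ⟨h, h2⟩
  · exact ⟨0, α i, ⟨h, this.2⟩, Or.inl ⟨rfl, rfl⟩⟩
  · exact ⟨-(α i), 0, ⟨this.1, h2.le⟩, Or.inr ⟨h, rfl, rfl⟩⟩

lemma CKle {M N : ℕ} (S : FidSetting M N) (P : PsiSetting N S.𝒞) {lam0 : ℝ} {α : Fin N → ℝ}
    (hO : ∀ i, OneD S.𝒞 (P.ψ i) (P.dψ i) (α i) lam0) (hCC : CCond S P α lam0)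
    {X : Set (Fin N → ℝ)} (hXfeas : X ⊆ S.feas) {K : ℕ} {CK : ℝ}
    (hBRSC : BRSCholds S P X K CK) {x : Fin N → ℝ} (hxX : x ∈ X) (hK : 1 ≤ K) (i : Fin N)
    (hi : |x i| ≤ α i) : CK ≤ 1 := by
  have hx := hXfeas hxX
  obtain ⟨a, b, hxI, hI⟩ := exI S P hO i (hx i) hi
  obtain ⟨hab, hmem, hconc⟩ := concJ S P hO hCC hx i hI
  obtain ⟨t, htI, htx⟩ : ∃ t ∈ Set.Icc a b, t ≠ x i := by
    by_cases e : a = x i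
    · exact ⟨b, ⟨hab.le, le_rfl⟩, by rw [← e]; exact hab.ne'⟩
    · exact ⟨a, ⟨le_rfl, hab.le⟩, e⟩
  obtain ⟨c, hc⟩ : ∃ c, ∀ r ∈ Set.Icc a b, P.dψ i (α i) * |r| = c * r := by
    rcases hI with ⟨rfl, rfl⟩ | ⟨_, rfl, rfl⟩
    · exact ⟨P.dψ i (α i), fun r hr => by rw [abs_of_nonneg hr.1]⟩
    · exact ⟨-P.dψ i (α i), fun r hr => by rw [abs_of_nonpos hr.2]; ring⟩
  set R := ∑ k ∈ Finset.univ.erase i, betaPen P α lam0 k (x k) with hR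
  have hd : HasDerivWithinAt (fun t => JPsi S P α lam0 (Function.update x i t))
      (S.gradF x i + (-P.dψ i (x i) + c)) (Set.Icc a b) (x i) := by
    have h1 := F_upd S (x := x) i (t := x i) (by simpa using hx)
    rw [Function.update_eq_self] at h1
    have h2 := (P.hderiv i (x i) (hx i)).mono (fun r hr => (hmem r hr).1 : Set.Icc a b ⊆ S.𝒞)
    have h3 : HasDerivWithinAt (fun r => c * r) c (Set.Icc a b) (x i) := by
      simpa using ((hasDerivAt_id (x i)).const_mul c).hasDerivWithinAt
    have h4 := h1.hasDerivWithinAt (s := Set.Icc a b) |>.add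
      (((h2.const_sub (P.ψ i 0)).add h3).add_const R)
    have key : ∀ r ∈ Set.Icc a b, JPsi S P α lam0 (Function.update x i r)
        = S.F (Function.update x i r) + ((P.ψ i 0 - P.ψ i r + c * r) + R) := by
      intro r hr
      rw [J_upd, ← hc r hr]
      congr 2
      exact OneD.bet_small (hmem r hr).2
    exact h4.congr key (key _ hxI)
  have hg := concave_grad hconc hxI htI hd
  simp only [J_upd] at hg
  rw [show betaPen P α lam0 i t = _ from OneD.bet_small (hmem t htI).2,
    show betaPen P α lam0 i (x i) = _ from OneD.bet_small (hmem _ hxI).2,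
    hc t htI, hc _ hxI, Function.update_eq_self] at hg
  have hb := breg_ineq S P hXfeas hBRSC hxX (upd_feas S hx i (hmem t htI).1) (by
    refine le_trans ?_ hK
    unfold norm0
    rw [← Finset.card_singleton i]
    apply Finset.card_le_card
    intro k
    simp only [Finset.mem_filter, Finset.mem_univ, true_and, Pi.sub_apply, Finset.mem_singleton]
    intro h
    by_contra e
    rw [Function.update_of_ne e] at h
    simp at h)
  rw [dotp, Finset.sum_eq_single i, Finset.sum_eq_single i] at hb
  · simp only [Pi.sub_apply, Function.update_self] at hb
    have hs := (hO i).grad (x i) (hx i) t (hmem t htI).1 htx.symm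
    set D := P.ψ i t - P.ψ i (x i) - P.dψ i (x i) * (t - x i) with hD
    have hDpos : 0 < D := by linarith
    have : CK * D ≤ D := by
      have e : (S.gradF x i + (-P.dψ i (x i) + c)) * (t - x i) = S.gradF x i * (t - x i)
        - P.dψ i (x i) * (t - x i) + c * t - c * x i := by ring
      rw [e] at hg
      linarith
    by_contra hcon
    push Not at hcon
    nlinarith
  · intro k _ hk; simp [Function.update_of_ne hk]
  · simp
  · intro k _ hk; simp [Function.update_of_ne hk]
  · simp

lemma norm0_le_add {N : ℕ} (x y : Fin N → ℝ) : norm0 (x - y) ≤ norm0 x + norm0 y := by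
  unfold norm0
  refine le_trans (Finset.card_le_card ?_) (Finset.card_union_le _ _)
  intro i
  simp only [Finset.mem_filter, Finset.mem_univ, true_and, Pi.sub_apply, Finset.mem_union]
  intro h
  by_contra hc
  push Not at hc
  rw [hc.1, hc.2] at h
  simp at h

lemma norm0_comm {N : ℕ} (x y : Fin N → ℝ) : norm0 (x - y) = norm0 (y - x) := by
  unfold norm0
  congr 1
  ext i
  simp [sub_eq_zero, eq_comm]

lemma norm0_sum {N : ℕ} (x : Fin N → ℝ) (lam : ℝ) :
    lam * (norm0 x : ℝ) = ∑ i, if x i ≠ 0 then lam else 0 := by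
  unfold norm0
  rw [← Finset.sum_filter, Finset.sum_const, nsmul_eq_mul, mul_comm]

lemma JPsi_le_J0 {M N : ℕ} (S : FidSetting M N) (P : PsiSetting N S.𝒞) {lam0 : ℝ}
    {α : Fin N → ℝ} (hO : ∀ i, OneD S.𝒞 (P.ψ i) (P.dψ i) (α i) lam0) {x : Fin N → ℝ}
    (hx : x ∈ S.feas) : JPsi S P α lam0 x ≤ J0 S lam0 x := by
  unfold JPsi J0
  rw [norm0_sum]
  gcongr with i
  split_ifs with h
  · exact (hO i).bet_le (hx i)
  · push Not at h
    rw [h]; exact (hO i).bet_zero.le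

lemma JPsi_eq_J0 {M N : ℕ} (S : FidSetting M N) (P : PsiSetting N S.𝒞) {lam0 : ℝ}
    {α : Fin N → ℝ} (hO : ∀ i, OneD S.𝒞 (P.ψ i) (P.dψ i) (α i) lam0) {x : Fin N → ℝ}
    (hx : x ∈ S.feas) (hb : ∀ i, x i = 0 ∨ α i ≤ |x i|) : JPsi S P α lam0 x = J0 S lam0 x := by
  unfold JPsi J0
  rw [norm0_sum]
  congr 1
  refine Finset.sum_congr rfl fun i _ => ?_
  rcases hb i with h | h
  · rw [h, if_neg (by simp)]; exact (hO i).bet_zero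
  · have : x i ≠ 0 := by
      intro e; rw [e, abs_zero] at h; linarith [(hO i).hα]
    rw [if_pos this]; exact (hO i).bet_big (hx i) h

/-- Theorem 4.3: under (CC) and a lower bound on `λ₀`, the sparsest
critical point is the unique global minimizer of `J_Ψ` (and of `J₀`). -/
theorem stmt10 {M N : ℕ} (S : FidSetting M N) (P : PsiSetting N S.𝒞)
    (lam0 : ℝ) (hlam0 : 0 < lam0) (α : Fin N → ℝ)
    (hα : ∀ i, 0 < α i ∧ dBreg (P.ψ i) (P.dψ i) 0 (α i) = lam0)
    (X : Set (Fin N → ℝ)) (hXfeas : X ⊆ S.feas) (K : ℕ) (CK : ℝ) (hCK : 0 < CK)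
    (hBRSC : BRSCholds S P X K CK)
    (hCC : CCond S P α lam0)
    (x : Fin N → ℝ) (hxX : x ∈ X) (hxcrit : IsCritical S P α x)
    (hz : ∀ i, |zmap S P x i| ∉
      Set.Icc (CK * (P.dψ i (α i) - P.dψ i 0) + P.dψ i 0)
              ((P.dψ i (α i) - P.dψ i 0) / CK + P.dψ i 0))
    (hpos : 0 < 1 + (K : ℝ) - 2 * (norm0 x : ℝ))
    (hlambig : S.F x / (1 + (K : ℝ) - 2 * (norm0 x : ℝ)) < lam0) :
    (∀ x' ∈ S.feas, x' ≠ x → JPsi S P α lam0 x < JPsi S P α lam0 x') ∧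
    (∀ x' ∈ S.feas, x' ≠ x → J0 S lam0 x < J0 S lam0 x') ∧
    (∀ x' : Fin N → ℝ, IsCritical S P α x' → x' ≠ x → K < norm0 (x' - x)) := by
  have hO := fun i => oneD_of S.h𝒞 P hα i
  have hx := hXfeas hxX
  have hgood : 1 ≤ K → ∀ i, GoodPt S.𝒞 (P.dψ i) (α i) CK (x i) (zmap S P x i) := by
    intro hK i
    exact (hO i).good_of hCK (hx i) (hxcrit.2 i) (hz i)
      (fun h => CKle S P hO hCC hXfeas hBRSC hxX hK i h)
  have hKpos : ∀ x' : Fin N → ℝ, x' ≠ x → norm0 (x - x') ≤ K → 1 ≤ K := by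
    intro x' hne hK
    refine le_trans ?_ hK
    obtain ⟨k, hk⟩ := Function.ne_iff.1 hne
    unfold norm0
    exact Finset.card_pos.2 ⟨k, by simpa [sub_eq_zero, eq_comm] using hk⟩
  have hA : ∀ x' ∈ S.feas, x' ≠ x → norm0 (x - x') ≤ K →
      JPsi S P α lam0 x < JPsi S P α lam0 x' := fun x' hx' hne hK =>
    claimA S P hO hXfeas hCK hBRSC hxX hx' (hgood (hKpos x' hne hK)) hne hK
  have hxnb : ∀ i, x i = 0 ∨ α i ≤ |x i| := by
    intro i
    rcases Nat.eq_zero_or_pos K with h | h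
    · left
      have h0 : norm0 x = 0 := by
        rw [h] at hpos
        by_contra hc
        have : (1:ℝ) ≤ (norm0 x : ℝ) := by exact_mod_cast Nat.one_le_iff_ne_zero.2 hc
        norm_num at hpos
        linarith
      unfold norm0 at h0
      rw [Finset.card_eq_zero] at h0
      by_contra hc
      have : i ∈ (Finset.univ.filter fun i => x i ≠ 0) := by simp [hc]
      rw [h0] at this
      simp at this
    · rcases hgood h i with h | h
      · exact Or.inl h.2.1
      · exact Or.inr h.1.le
  have hFnn : ∀ x' ∈ S.feas, 0 ≤ S.F x' := by
    intro x' hx'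
    exact Finset.sum_nonneg fun j _ => S.hg_nonneg j _ (interior_subset (S.hdom x' hx' j))
  have hmain : ∀ n : ℕ, ∀ x' ∈ S.feas,
      (Finset.univ.filter fun i => x' i ≠ 0 ∧ |x' i| < α i).card = n → x' ≠ x →
      JPsi S P α lam0 x < JPsi S P α lam0 x' := by
    intro n
    induction n using Nat.strong_induction_on with
    | _ n ih =>
    intro x' hx' hn hne
    by_cases hbad : ∃ i, x' i ≠ 0 ∧ |x' i| < α i
    · obtain ⟨i, hi0, hia⟩ := hbad
      obtain ⟨a, b, hxI, hI⟩ := exI S P hO i (hx' i) hia.le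
      obtain ⟨hab, hmem, hconc⟩ := concJ S P hO hCC hx' i hI
      have hlt : ∀ r ∈ S.𝒞, (r = 0 ∨ |r| = α i) → Function.update x' i r ≠ x →
          JPsi S P α lam0 x < JPsi S P α lam0 (Function.update x' i r) := by
        intro r hr hr0 hne'
        refine ih _ ?_ _ (upd_feas S hx' i hr) rfl hne'
        rw [← hn]
        apply Finset.card_lt_card
        rw [Finset.ssubset_iff_of_subset]
        · refine ⟨i, by simp [hi0, hia], ?_⟩
          simp only [Finset.mem_filter, Finset.mem_univ, true_and, Function.update_self]
          rintro ⟨h1, h2⟩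
          rcases hr0 with h | h
          · exact h1 h
          · linarith
        · intro k
          simp only [Finset.mem_filter, Finset.mem_univ, true_and]
          by_cases e : k = i
          · subst e; simp [hi0, hia]
          · rw [Function.update_of_ne e]; exact id
      have hαi := (hO i).hα
      have ha1 : a = 0 ∨ |a| = α i := by
        rcases hI with ⟨rfl, rfl⟩ | ⟨_, rfl, rfl⟩
        · simp
        · right; rw [abs_neg, abs_of_pos hαi]
      have hb1 : b = 0 ∨ |b| = α i := by
        rcases hI with ⟨rfl, rfl⟩ | ⟨_, rfl, rfl⟩
        · right; rw [abs_of_pos hαi]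
        · simp
      have hai : a < x' i := by
        refine lt_of_le_of_ne hxI.1 fun e => ?_
        rcases ha1 with h | h
        · exact hi0 (e ▸ h)
        · rw [← e] at hia; linarith
      have hbi : x' i < b := by
        refine lt_of_le_of_ne hxI.2 fun e => ?_
        rcases hb1 with h | h
        · exact hi0 (e ▸ h)
        · rw [e] at hia; linarith
      have haI : a ∈ Set.Icc a b := ⟨le_rfl, hab.le⟩
      have hbI : b ∈ Set.Icc a b := ⟨hab.le, le_rfl⟩
      have hba : 0 < b - a := sub_pos.2 hab
      have hp : 0 < (b - x' i) / (b - a) := div_pos (by linarith) hba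
      have hq : 0 < (x' i - a) / (b - a) := div_pos (by linarith) hba
      have hpq : (b - x' i) / (b - a) + (x' i - a) / (b - a) = 1 := by
        field_simp; ring
      have hcomb := hconc.2 haI hbI hp.le hq.le hpq
      have hpt : ((b - x' i) / (b - a)) • a + ((x' i - a) / (b - a)) • b = x' i := by
        simp only [smul_eq_mul]; field_simp; ring
      rw [hpt] at hcomb
      simp only [Function.update_eq_self, smul_eq_mul] at hcomb
      have La := hlt a (hmem a haI).1 ha1
      have Lb := hlt b (hmem b hbI).1 hb1
      set p := (b - x' i) / (b - a)
      set q := (x' i - a) / (b - a)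
      set Ja := JPsi S P α lam0 (Function.update x' i a)
      set Jb := JPsi S P α lam0 (Function.update x' i b)
      have hJ : JPsi S P α lam0 x = p * JPsi S P α lam0 x + q * JPsi S P α lam0 x := by
        rw [← add_mul, hpq, one_mul]
      by_cases ea : Function.update x' i a = x
      · have eb : Function.update x' i b ≠ x := by
          intro eb
          have := congrFun (ea.trans eb.symm) i
          simp at this
          linarith
        have h1 : Ja = JPsi S P α lam0 x := by simp only [Ja, ea]
        have h2 := mul_lt_mul_of_pos_left (Lb eb) hq
        rw [h1] at hcomb
        linarith
      · have h1 := mul_lt_mul_of_pos_left (La ea) hp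
        have h2 : JPsi S P α lam0 x ≤ Jb := by
          by_cases eb : Function.update x' i b = x
          · simp only [Jb, eb]; exact le_rfl
          · exact (Lb eb).le
        have h3 := mul_le_mul_of_nonneg_left h2 hq.le
        linarith
    · by_cases hK : norm0 (x - x') ≤ K
      · exact hA x' hx' hne hK
      · push Not at hK hbad
        have e1 := JPsi_eq_J0 S P hO hx' (fun i => by
          by_cases h : x' i = 0
          · exact Or.inl h
          · exact Or.inr (hbad i h))
        have e2 := JPsi_le_J0 S P hO hx
        have h1 : (K : ℝ) + 1 ≤ (norm0 x : ℝ) + (norm0 x' : ℝ) := by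
          exact_mod_cast (Nat.succ_le_of_lt hK).trans (norm0_le_add x x')
        have h2 := hFnn x' hx'
        rw [div_lt_iff₀ hpos] at hlambig
        rw [e1]
        refine lt_of_le_of_lt e2 ?_
        unfold J0
        have := mul_le_mul_of_nonneg_left h1 hlam0.le
        nlinarith
  have hfirst : ∀ x' ∈ S.feas, x' ≠ x → JPsi S P α lam0 x < JPsi S P α lam0 x' :=
    fun x' hx' hne => hmain _ x' hx' rfl hne
  refine ⟨hfirst, ?_, ?_⟩
  · intro x' hx' hne
    rw [← JPsi_eq_J0 S P hO hx hxnb]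
    exact (hfirst x' hx' hne).trans_le (JPsi_le_J0 S P hO hx')
  · intro x' hx' hne
    by_contra hcon
    push Not at hcon
    rw [norm0_comm] at hcon
    have hg := hgood (hKpos x' hne hcon)
    have hb := hBRSC x hxX x' hx'.1 hne.symm hcon
    have hc : ∀ i, x' i ≠ x i → 0 < CK * ((P.dψ i (x i) - P.dψ i (x' i)) * (x i - x' i))
        - (S.gradF x i - S.gradF x' i) * (x i - x' i) := by
      intro i hi
      have := (hO i).crit_pos hCK (hx i) (hg i) (hx'.1 i) hi (hx'.2 i)
      simp only [zmap] at this
      nlinarith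
    obtain ⟨k, hk⟩ := Function.ne_iff.1 hne
    have hsum : 0 < ∑ i, (CK * ((P.dψ i (x i) - P.dψ i (x' i)) * (x i - x' i))
        - (S.gradF x i - S.gradF x' i) * (x i - x' i)) := by
      refine Finset.sum_pos' (fun i _ => ?_) ⟨k, Finset.mem_univ _, hc k hk⟩
      by_cases e : x' i = x i
      · rw [e]; simp
      · exact (hc i e).le
    rw [Finset.sum_sub_distrib, ← Finset.mul_sum] at hsum
    simp only [dotp, PsiSetting.gradPsi, Pi.sub_apply] at hb
    linarith
end
end

section
/- Under the oracle setting, assume F := G_y(A·) satisfies the BRSC property with respect to Ψ, a compact convex set X containing both x^or and x*, and K ≥ 2k*, with constant C_K > 0. Then the oracle solution belongs to the set 𝔖 := {u ∈ C^{k*} : F_{σ*}(u*) ≥ C_K · Σ_{j=1}^{k*} d_{ψ_{σ*[j]}}(u*_j, u_j)}; that is, Σ_{j=1}^{k*} d_{ψ_{σ*[j]}}(u*_j, u^or_j) ≤ F_{σ*}(u*)/C_K. -/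
open Classical

noncomputable section

/-- the support of a vector, as a `Finset`. -/
def suppF {N : ℕ} (x : Fin N → ℝ) : Finset (Fin N) := Finset.univ.filter fun i => x i ≠ 0

/-- the restricted data term `F_σ(u) = G_y(A_σ u)`. -/
def Fres {M N : ℕ} (S : FidSetting M N) (σ : Finset (Fin N)) (u : {i // i ∈ σ} → ℝ) : ℝ :=
  S.F (zpad σ u)

lemma dotp_gradF {M N : ℕ} (S : FidSetting M N) (x d : Fin N → ℝ) :
    dotp (S.gradF x) d = ∑ j, S.dg j (S.A.mulVec x j) * S.A.mulVec d j := by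
  simp only [dotp, FidSetting.gradF, Matrix.mulVec, dotProduct, Finset.sum_mul, Finset.mul_sum]
  rw [Finset.sum_comm]
  refine Finset.sum_congr rfl fun j _ => Finset.sum_congr rfl fun i _ => ?_
  ring

lemma hasDeriv_F {M N : ℕ} (S : FidSetting M N) (x d : Fin N → ℝ) (t : ℝ)
    (h : x + t • d ∈ S.feas) :
    HasDerivAt (fun t : ℝ => S.F (x + t • d)) (dotp (S.gradF (x + t • d)) d) t := by
  rw [dotp_gradF]
  unfold FidSetting.F
  refine HasDerivAt.fun_sum fun j _ => ?_
  have h1 := S.hg_deriv j _ (S.hdom _ h j)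
  have h2 : HasDerivAt (fun t : ℝ => S.A.mulVec (x + t • d) j) (S.A.mulVec d j) t := by
    have : (fun t : ℝ => S.A.mulVec (x + t • d) j)
        = fun t : ℝ => S.A.mulVec x j + t * S.A.mulVec d j := by
      funext t
      simp [Matrix.mulVec_add, Matrix.mulVec_smul]
    rw [this]
    simpa using ((hasDerivAt_id t).mul_const (S.A.mulVec d j)).const_add (S.A.mulVec x j)
  exact HasDerivAt.comp t h1 h2

lemma hasDeriv_Psi {N : ℕ} {𝒞 : Set ℝ} (P : PsiSetting N 𝒞) (x d : Fin N → ℝ)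
    (s : Set ℝ) (h : ∀ t ∈ s, ∀ i, (x + t • d) i ∈ 𝒞) (t : ℝ) (ht : t ∈ s) :
    HasDerivWithinAt (fun t : ℝ => ∑ i, P.ψ i ((x + t • d) i))
      (dotp (P.gradPsi (x + t • d)) d) s t := by
  unfold dotp
  refine HasDerivWithinAt.fun_sum fun i _ => ?_
  have h1 := P.hderiv i _ (h t ht i)
  have h2 : HasDerivWithinAt (fun t : ℝ => (x + t • d) i) (d i) s t := by
    simpa using (((hasDerivAt_id t).mul_const (d i)).const_add (x i)).hasDerivWithinAt
  exact HasDerivWithinAt.comp t h1 h2 (fun t ht => h t ht i)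

lemma dotp_sub_smul {ι : Type*} [Fintype ι] (a b d : ι → ℝ) (t : ℝ) :
    dotp (a - b) (t • d) = t * (dotp a d - dotp b d) := by
  simp only [dotp, ← Finset.sum_sub_distrib, Finset.mul_sum]
  refine Finset.sum_congr rfl fun i _ => ?_
  simp; ring

/-- Proposition 4.5: the oracle solution lies in the safe oracle region `𝔖`. -/
theorem stmt12 {M N : ℕ} (S : FidSetting M N) (P : PsiSetting N S.𝒞)
    -- the oracle setting: `x*`, its support, full column rank of `A_{σ*}`,
    -- and the oracle solution `u^or` (the unique minimizer of `F_{σ*}` over `𝒞^{k*}`)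
    (xstar : Fin N → ℝ) (hxstar : xstar ∈ S.feas) (hσne : (suppF xstar).Nonempty)
    (hrank : LinearIndependent ℝ fun i : {i // i ∈ suppF xstar} => fun j : Fin M => S.A j i.1)
    (uor : {i // i ∈ suppF xstar} → ℝ)
    (huor_feas : ∀ j, uor j ∈ S.𝒞)
    (huor_min : ∀ u : {i // i ∈ suppF xstar} → ℝ, (∀ j, u j ∈ S.𝒞) →
      Fres S (suppF xstar) uor ≤ Fres S (suppF xstar) u)
    (huor_uniq : ∀ u : {i // i ∈ suppF xstar} → ℝ, (∀ j, u j ∈ S.𝒞) →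
      Fres S (suppF xstar) u ≤ Fres S (suppF xstar) uor → u = uor)
    -- BRSC w.r.t. `Ψ`, a compact convex `X` containing `x^or` and `x*`, and `K ≥ 2k*`
    (X : Set (Fin N → ℝ)) (hXfeas : X ⊆ S.feas) (hXcomp : IsCompact X) (hXconv : Convex ℝ X)
    (hXor : zpad (suppF xstar) uor ∈ X) (hXstar : xstar ∈ X)
    (K : ℕ) (hK : 2 * (suppF xstar).card ≤ K) (CK : ℝ) (hCK : 0 < CK)
    (hBRSC : BRSCholds S P X K CK)
 :
    ∑ j : {i // i ∈ suppF xstar}, dBreg (P.ψ j.1) (P.dψ j.1) (xstar j.1) (uor j)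
      ≤ Fres S (suppF xstar) (fun j => xstar j.1) / CK := by
  have hs0 : ∀ i, i ∉ suppF xstar → xstar i = 0 := by
    intro i hi
    by_contra hne
    exact hi (by simp [suppF, hne])
  generalize suppF xstar = σ at *
  set x0 : Fin N → ℝ := zpad σ uor with hx0
  have hz : ∀ x : Fin N → ℝ, (∀ i, i ∉ σ → x i = 0) → zpad σ (fun j => x j.1) = x := by
    intro x hx
    funext i
    by_cases h : i ∈ σ
    · simp [zpad, h]
    · simp [zpad, h, hx i h]
  have h00 : ∀ i, i ∉ σ → x0 i = 0 := by
    intro i hi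
    simp [hx0, zpad, hi]
  have h0u : ∀ j : {i // i ∈ σ}, x0 j.1 = uor j := by
    intro j
    simp [hx0, zpad]
  set d : Fin N → ℝ := xstar - x0 with hd
  have hd0 : ∀ i, i ∉ σ → d i = 0 := by
    intro i hi
    simp [hd, hs0 i hi, h00 i hi]
  have hX : ∀ t ∈ Set.Icc (0:ℝ) 1, x0 + t • d ∈ X := fun t ht =>
    hXconv.add_smul_sub_mem hXor hXstar ht
  have hf : ∀ t ∈ Set.Icc (0:ℝ) 1, x0 + t • d ∈ S.feas := fun t ht => hXfeas (hX t ht)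
  have hx1 : x0 + (1:ℝ) • d = xstar := by simp [hd]
  have hx00 : x0 + (0:ℝ) • d = x0 := by simp
  -- optimality
  have hopt : 0 ≤ dotp (S.gradF x0) d := by
    have h1 := hasDeriv_F S x0 d 0 (hf 0 (by simp))
    rw [hx00] at h1
    have h2 := (hasDerivAt_iff_tendsto_slope.1 h1).mono_left
      (nhdsWithin_mono (0:ℝ) (s := Set.Ioi 0) (fun y hy => ne_of_gt hy))
    refine ge_of_tendsto h2 ?_
    filter_upwards [Ioc_mem_nhdsGT (zero_lt_one (α := ℝ))] with t ht
    have ht' : t ∈ Set.Icc (0:ℝ) 1 := ⟨ht.1.le, ht.2⟩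
    have h3 := huor_min (fun j => (x0 + t • d) j.1) (fun j => hf t ht' j.1)
    unfold Fres at h3
    rw [hz _ (fun i hi => by simp [h00 i hi, hd0 i hi])] at h3
    rw [slope_def_field, hx00]
    exact div_nonneg (by linarith) (by linarith [ht.1])
  have hmono : MonotoneOn (fun t : ℝ => S.F (x0 + t • d)
      - CK * (∑ i, P.ψ i ((x0 + t • d) i))
      - t * (dotp (S.gradF x0) d - CK * dotp (P.gradPsi x0) d)) (Set.Icc 0 1) := by
    have hder : ∀ t ∈ Set.Icc (0:ℝ) 1, HasDerivWithinAt (fun t : ℝ => S.F (x0 + t • d)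
      - CK * (∑ i, P.ψ i ((x0 + t • d) i))
      - t * (dotp (S.gradF x0) d - CK * dotp (P.gradPsi x0) d))
      (dotp (S.gradF (x0 + t • d)) d - CK * dotp (P.gradPsi (x0 + t • d)) d
        - 1 * (dotp (S.gradF x0) d - CK * dotp (P.gradPsi x0) d)) (Set.Icc 0 1) t := by
      intro t ht
      exact (((hasDeriv_F S x0 d t (hf t ht)).hasDerivWithinAt).sub
        ((hasDeriv_Psi P x0 d (Set.Icc 0 1) hf t ht).const_mul CK)).sub
        ((hasDerivWithinAt_id t _).mul_const _)
    refine monotoneOn_of_hasDerivWithinAt_nonneg (convex_Icc 0 1)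
      (fun t ht => (hder t ht).continuousWithinAt)
      (fun t ht => (hder t (interior_subset ht)).mono interior_subset) ?_
    intro t ht
    rw [interior_Icc] at ht
    by_cases he : x0 + t • d = x0
    · rw [he]; linarith
    · have hdt : x0 + t • d - x0 = t • d := by simp
      have hb := hBRSC _ (hX t ⟨ht.1.le, ht.2.le⟩) x0 (hXfeas hXor) he (by
        rw [hdt]
        have : norm0 (t • d) ≤ σ.card := by
          unfold norm0
          refine Finset.card_le_card fun i hi => ?_
          by_contra hn
          simp [hd0 i hn] at hi
        omega)
      rw [hdt, dotp_sub_smul, dotp_sub_smul] at hb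
      have hb' : t * (CK * (dotp (P.gradPsi (x0 + t • d)) d - dotp (P.gradPsi x0) d))
        ≤ t * (dotp (S.gradF (x0 + t • d)) d - dotp (S.gradF x0) d) := by
        linarith
      have := le_of_mul_le_mul_left hb' ht.1
      linarith
  have hfin := hmono (Set.left_mem_Icc.2 zero_le_one) (Set.right_mem_Icc.2 zero_le_one) zero_le_one
  simp only [hx00, hx1] at hfin
  have hF0 : 0 ≤ S.F x0 := Finset.sum_nonneg fun j _ =>
    S.hg_nonneg j _ (interior_subset (S.hdom x0 (hXfeas hXor) j))
  have hsum : ∑ j : {i // i ∈ σ}, dBreg (P.ψ j.1) (P.dψ j.1) (xstar j.1) (uor j)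
      = ∑ i, P.ψ i (xstar i) - ∑ i, P.ψ i (x0 i) - dotp (P.gradPsi x0) d := by
    have e1 : ∑ j : {i // i ∈ σ}, dBreg (P.ψ j.1) (P.dψ j.1) (xstar j.1) (uor j)
        = ∑ i ∈ σ, dBreg (P.ψ i) (P.dψ i) (xstar i) (x0 i) := by
      rw [← Finset.sum_coe_sort σ]
      exact Finset.sum_congr rfl fun j _ => by rw [h0u j]
    rw [e1, Finset.sum_subset (Finset.subset_univ σ)
      (fun i _ hi => by simp [dBreg, hs0 i hi, h00 i hi])]
    unfold dotp
    rw [← Finset.sum_sub_distrib, ← Finset.sum_sub_distrib]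
    rfl
  rw [hsum, le_div_iff₀ hCK]
  unfold Fres
  rw [hz xstar hs0]
  linarith
end
end
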